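/- arXiv:1609.06724 — 12 statements merged into one kernel-verified Lean document; each statement's English description precedes it below -/
import Mathlib

section
/- Let Q : Fin 4 → Fin 2 → ℂ satisfy the F-term equations: for all a, b ∈ Fin 2, ∑_{r ∈ Fin 4} Q r a * Q r b = 0. Define the 4×4 complex matrix V by V r s = Q r 0 * Q s 1 − Q r 1 * Q s 0 (the gauge-invariant meson matrix V^{rs} = ε^{ab} Q^r_a Q^s_b). Then V is antisymmetric (Vᵀ = −V), satisfies V * V = 0, and has rank at most 2. -/
/-!
Regard `Q` as a 4×2 matrix `M` and let `E` be the 2×2 matrix of `ε`. Then `V = M E Mᵀ`, while the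
F-terms say `Mᵀ M = 0`. Hence `V V = M E (Mᵀ M) E Mᵀ = 0`, and the rank of `V` is at most the
number of columns of `M`. Antisymmetry is immediate from the entries.
-/

open Matrix

/-- The Higgs branch of SU(2) with 2 flavours: the F-terms ∑_r Q^r_a Q^r_b = 0 imply that
the meson matrix V^{rs} = ε^{ab} Q^r_a Q^s_b is antisymmetric, squares to zero,
and has rank at most 2. -/
theorem su2_two_flavours_meson (Q : Fin 4 → Fin 2 → ℂ)
    (hF : ∀ a b : Fin 2, ∑ r : Fin 4, Q r a * Q r b = 0)
    (V : Matrix (Fin 4) (Fin 4) ℂ)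
    (hV : ∀ r s : Fin 4, V r s = Q r 0 * Q s 1 - Q r 1 * Q s 0) :
    Vᵀ = -V ∧ V * V = 0 ∧ V.rank ≤ 2 := by
  let M : Matrix (Fin 4) (Fin 2) ℂ := Matrix.of Q
  let E : Matrix (Fin 2) (Fin 2) ℂ := !![0, 1; -1, 0]
  have hfac : V = M * (E * Mᵀ) := by
    ext r s
    simp [hV, M, E, Matrix.mul_apply, Matrix.vecMul, dotProduct, Fin.sum_univ_two]
    ring
  have hM : Mᵀ * M = 0 := by
    ext a b
    simpa [M, Matrix.mul_apply] using hF a b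
  refine ⟨?_, ?_, ?_⟩
  · ext r s
    simp only [Matrix.transpose_apply, Matrix.neg_apply, hV]
    ring
  · calc V * V = M * (E * ((Mᵀ * M) * (E * Mᵀ))) := by
          rw [hfac]
          simp only [Matrix.mul_assoc]
      _ = 0 := by simp [hM]
  · rw [hfac]
    exact (Matrix.rank_mul_le_left _ _).trans (by simpa using M.rank_le_card_width)
end

section
/- A 4×4 complex matrix V satisfies Vᵀ = −V and V * V = 0 if and only if there exist vectors p, q : Fin 4 → ℂ with ∑_r p r * p r = 0, ∑_r p r * q r = 0, ∑_r q r * q r = 0 such that V r s = p r * q s − q r * p s for all r, s. -/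
/-!
An antisymmetric `4 × 4` matrix with `V * V = 0` has `det V = 0`. Since the determinant is
the square of the Pfaffian, the Pfaffian vanishes too, and this is the Plücker relation saying that
the bivector `V` is decomposable. Explicitly, if `V i j ≠ 0`, then `V = p ∧ q` with `p` the `i`-th
row divided by `V i j` and `q` the `j`-th row (`plucker_of_sq_eq_zero`). By antisymmetry the dot
products of rows of `V` are the entries of `-(V * V)`, so `p` and `q` form an isotropic pair.
Conversely, `V * V` for `V = p ∧ q` is a combination of the dot products of `p` and `q`.
-/

open Matrix

/-- The determinant of an antisymmetric `4 × 4` matrix is the square of its Pfaffian, so the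
Pfaffian of a square-zero one vanishes. -/
lemma pfaffian_eq_zero_of_sq_eq_zero {V : Matrix (Fin 4) (Fin 4) ℂ}
    (hanti : ∀ r s, V s r = -V r s) (hsq : V * V = 0) :
    V 0 1 * V 2 3 - V 0 2 * V 1 3 + V 0 3 * V 1 2 = 0 := by
  have hdiag : ∀ r, V r r = 0 := fun r => self_eq_neg.mp (hanti r r)
  have hdet : V.det = 0 := by
    have h := congrArg Matrix.det hsq
    rw [det_mul, det_zero] at h
    exact mul_self_eq_zero.mp h
  have hpf : V.det = (V 0 1 * V 2 3 - V 0 2 * V 1 3 + V 0 3 * V 1 2) ^ 2 := by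
    rw [det_succ_row_zero]
    simp [Fin.sum_univ_succ, det_fin_three, Fin.succAbove, hdiag, hanti 0 1, hanti 0 2, hanti 0 3,
      hanti 1 2, hanti 1 3, hanti 2 3]
    ring
  exact pow_eq_zero_iff two_ne_zero |>.mp (hpf ▸ hdet)

/-- The three-term Plücker relation. It is trivial when two indices coincide, and otherwise is the
vanishing of the Pfaffian up to sign. -/
lemma plucker_of_sq_eq_zero {V : Matrix (Fin 4) (Fin 4) ℂ}
    (hanti : ∀ r s, V s r = -V r s) (hsq : V * V = 0) (i j r s : Fin 4) :
    V i j * V r s = V i r * V j s - V j r * V i s := by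
  have hpf := pfaffian_eq_zero_of_sq_eq_zero hanti hsq
  have hdiag : ∀ r, V r r = 0 := fun r => self_eq_neg.mp (hanti r r)
  have h01 := hanti 0 1
  have h02 := hanti 0 2
  have h03 := hanti 0 3
  have h12 := hanti 1 2
  have h13 := hanti 1 3
  have h23 := hanti 2 3
  clear hsq hanti
  fin_cases i <;> fin_cases j <;> fin_cases r <;> fin_cases s <;>
    simp only [Fin.zero_eta, Fin.mk_one, Fin.reduceFinMk, hdiag, h01, h02, h03, h12, h13, h23] <;>
    first
    | ring1
    | linear_combination hpf
    | linear_combination -hpf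

/-- A 4×4 complex matrix V satisfies Vᵀ = −V and V² = 0 iff V = p ∧ q for an isotropic
pair of vectors p, q with respect to the standard symmetric bilinear dot product on ℂ⁴. -/
theorem su2_higgs_branch_isotropic_pair (V : Matrix (Fin 4) (Fin 4) ℂ) :
    (Vᵀ = -V ∧ V * V = 0) ↔
      ∃ p q : Fin 4 → ℂ,
        (∑ r : Fin 4, p r * p r = 0) ∧
        (∑ r : Fin 4, p r * q r = 0) ∧
        (∑ r : Fin 4, q r * q r = 0) ∧
        ∀ r s : Fin 4, V r s = p r * q s - q r * p s := by
  constructor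
  · rintro ⟨hT, hsq⟩
    have hanti : ∀ r s, V s r = -V r s := fun r s => congrFun (congrFun hT r) s
    by_cases hV : V = 0
    · exact ⟨0, 0, by simp, by simp, by simp, by simp [hV]⟩
    obtain ⟨i, j, hij⟩ : ∃ i j, V i j ≠ 0 := by
      by_contra! h
      exact hV (Matrix.ext h)
    have hdot : ∀ a b, ∑ r, V a r * V b r = 0 := by
      intro a b
      have h : ∑ r, V a r * V r b = 0 := congrFun (congrFun hsq a) b
      simpa [hanti b] using h
    refine ⟨fun r => (V i j)⁻¹ * V i r, fun r => V j r, ?_, ?_, hdot j j, fun r s => ?_⟩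
    · calc ∑ r, (V i j)⁻¹ * V i r * ((V i j)⁻¹ * V i r)
          = (V i j)⁻¹ ^ 2 * ∑ r, V i r * V i r := by
            rw [Finset.mul_sum]
            exact Finset.sum_congr rfl fun r _ => by ring
        _ = 0 := by rw [hdot, mul_zero]
    · simp only [mul_assoc, ← Finset.mul_sum, hdot, mul_zero]
    · have h := plucker_of_sq_eq_zero hanti hsq i j r s
      field_simp
      linear_combination h
  · rintro ⟨p, q, hpp, hpq, hqq, hV⟩
    refine ⟨?_, ?_⟩
    · ext r s
      simp only [transpose_apply, Matrix.neg_apply, hV]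
      ring
    · ext r s
      simp only [mul_apply, hV, Matrix.zero_apply, Fin.sum_univ_four] at hpp hpq hqq ⊢
      linear_combination (p r * q s + q r * p s) * hpq - p r * p s * hqq - q r * q s * hpp
end

section
/- Let V be a 4×4 complex matrix with Vᵀ = −V and V * V = 0. Define the self-dual coordinates a₁ = V 0 1 + V 2 3, a₂ = V 0 2 − V 1 3, a₃ = V 0 3 + V 1 2 and the anti-self-dual coordinates b₁ = V 0 1 − V 2 3, b₂ = V 0 2 + V 1 3, b₃ = V 0 3 − V 1 2. Then a₁² + a₂² + a₃² = 0 and b₁² + b₂² + b₃² = 0. -/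
open Matrix

/-!
Write `S` for the sum of the squares of the six entries above the diagonal and
`P = V 0 1 * V 2 3 - V 0 2 * V 1 3 + V 0 3 * V 1 2` for the Pfaffian. The two quadrics are
`S + 2 P` and `S - 2 P`, so it suffices that both vanish. The trace of `V * V` is `-2 S`,
giving `S = 0`. If `W` denotes the Hodge dual of `V`, then `V * W = -P • 1`, whence
`P • V = -(V * V) * W = 0`; since `P` is a linear combination of entries of `V`, `P ^ 2 = 0`.
-/

/-- For a 4×4 complex antisymmetric matrix with V² = 0, the self-dual triple and the
anti-self-dual triple each satisfy the null-quadric equation. -/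
theorem self_dual_triples_null (V : Matrix (Fin 4) (Fin 4) ℂ)
    (h1 : Vᵀ = -V) (h2 : V * V = 0) :
    (V 0 1 + V 2 3) ^ 2 + (V 0 2 - V 1 3) ^ 2 + (V 0 3 + V 1 2) ^ 2 = 0 ∧
    (V 0 1 - V 2 3) ^ 2 + (V 0 2 + V 1 3) ^ 2 + (V 0 3 - V 1 2) ^ 2 = 0 := by
  have anti (i j : Fin 4) : V j i = -V i j := congrFun (congrFun h1 i) j
  have diag (i : Fin 4) : V i i = 0 := self_eq_neg.mp (anti i i)
  have sq (i j : Fin 4) :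
      V i 0 * V 0 j + V i 1 * V 1 j + V i 2 * V 2 j + V i 3 * V 3 j = 0 := by
    have h := congrFun (congrFun h2 i) j
    simpa only [Matrix.mul_apply, Fin.sum_univ_four, Matrix.zero_apply] using h
  have s00 := sq 0 0
  have s11 := sq 1 1
  have s22 := sq 2 2
  have s33 := sq 3 3
  have s01 := sq 0 1
  have s02 := sq 0 2
  have s03 := sq 0 3
  simp only [diag, anti 0 1, anti 0 2, anti 0 3, anti 1 2, anti 1 3, anti 2 3]
    at s00 s11 s22 s33 s01 s02 s03
  have hS : V 0 1 ^ 2 + V 0 2 ^ 2 + V 0 3 ^ 2 + V 1 2 ^ 2 + V 1 3 ^ 2 + V 2 3 ^ 2 = 0 := by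
    linear_combination (-1 / 2 : ℂ) * (s00 + s11 + s22 + s33)
  have hP : V 0 1 * V 2 3 - V 0 2 * V 1 3 + V 0 3 * V 1 2 = 0 := by
    refine pow_eq_zero_iff two_ne_zero |>.mp ?_
    -- The three brackets are the entries `(0,1)`, `(0,2)`, `(0,3)` of `(V * V) * W`.
    linear_combination
      -V 2 3 * (V 2 3 * s00 - V 0 3 * s02 + V 0 2 * s03)
      + V 1 3 * (-V 1 3 * s00 + V 0 3 * s01 - V 0 1 * s03)
      - V 1 2 * (V 1 2 * s00 - V 0 2 * s01 + V 0 1 * s02)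
  constructor
  · linear_combination hS + 2 * hP
  · linear_combination hS - 2 * hP
end

section
/- Let V be a 4×4 complex matrix with Vᵀ = −V and V * V = 0. Define a₁ = V 0 1 + V 2 3, a₂ = V 0 2 − V 1 3, a₃ = V 0 3 + V 1 2 and b₁ = V 0 1 − V 2 3, b₂ = V 0 2 + V 1 3, b₃ = V 0 3 − V 1 2. Then aᵢ * bⱼ = 0 for all i, j ∈ {1, 2, 3}; in particular either (a₁,a₂,a₃) = 0 or (b₁,b₂,b₃) = 0. -/
open Matrix

/-!
The square of an antisymmetric `V` is symmetric, and its nine-dimensional traceless part is exactly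
the `(3, 3)` representation `a ⊗ b`: each product `aᵢ bⱼ` is a linear combination of the entries
of `V * V`. Hence all these products vanish, and since `ℂ` has no zero divisors, one of the two
triples is zero.
-/

/-- For a 4×4 complex antisymmetric matrix with V² = 0, the self-dual triple a(V) and the
anti-self-dual triple b(V) satisfy aᵢ bⱼ = 0 for all i, j; in particular a(V) = 0 or
b(V) = 0. -/
theorem self_dual_times_anti_self_dual_zero (V : Matrix (Fin 4) (Fin 4) ℂ)
    (h1 : Vᵀ = -V) (h2 : V * V = 0) :
    (∀ i j : Fin 3,
      ![V 0 1 + V 2 3, V 0 2 - V 1 3, V 0 3 + V 1 2] i *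
        ![V 0 1 - V 2 3, V 0 2 + V 1 3, V 0 3 - V 1 2] j = 0) ∧
    (![V 0 1 + V 2 3, V 0 2 - V 1 3, V 0 3 + V 1 2] = 0 ∨
      ![V 0 1 - V 2 3, V 0 2 + V 1 3, V 0 3 - V 1 2] = 0) := by
  have hs : ∀ i j, V j i = -V i j := fun i j => congrFun (congrFun h1 i) j
  have d : ∀ i, V i i = 0 := fun i => self_eq_neg.mp (hs i i)
  have e : ∀ i j, V i 0 * V 0 j + V i 1 * V 1 j + V i 2 * V 2 j + V i 3 * V 3 j = 0 := by
    intro i j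
    simpa [Matrix.mul_apply, Fin.sum_univ_four] using congrFun (congrFun h2 i) j
  have e00 := e 0 0
  have e11 := e 1 1
  have e22 := e 2 2
  have e33 := e 3 3
  have e01 := e 0 1
  have e02 := e 0 2
  have e03 := e 0 3
  have e12 := e 1 2
  have e13 := e 1 3
  have e23 := e 2 3
  -- Rewrite the entries of `V * V` in terms of the six entries of `V` above the diagonal.
  simp only [d, hs 0 1, hs 0 2, hs 0 3, hs 1 2, hs 1 3, hs 2 3]
    at e00 e11 e22 e33 e01 e02 e03 e12 e13 e23
  have key : ∀ i j : Fin 3,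
      ![V 0 1 + V 2 3, V 0 2 - V 1 3, V 0 3 + V 1 2] i *
        ![V 0 1 - V 2 3, V 0 2 + V 1 3, V 0 3 - V 1 2] j = 0 := by
    intro i j
    fin_cases i <;> fin_cases j <;> dsimp
    · linear_combination (-e00 - e11 + e22 + e33) / 2
    · linear_combination -e12 + e03
    · linear_combination -e13 - e02
    · linear_combination -e12 - e03
    · linear_combination (-e00 - e22 + e11 + e33) / 2
    · linear_combination -e23 + e01
    · linear_combination -e13 + e02
    · linear_combination -e23 - e01
    · linear_combination (-e00 - e33 + e11 + e22) / 2
  refine ⟨key, ?_⟩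
  by_contra! h
  obtain ⟨i, hi⟩ := Function.ne_iff.mp h.1
  obtain ⟨j, hj⟩ := Function.ne_iff.mp h.2
  exact mul_ne_zero hi hj (key i j)
end

section
/- A 4×4 complex matrix V with Vᵀ = −V satisfies V * V = 0 if and only if either (a₁, a₂, a₃) = (0,0,0) and b₁² + b₂² + b₃² = 0, or (b₁, b₂, b₃) = (0,0,0) and a₁² + a₂² + a₃² = 0, where a₁ = V 0 1 + V 2 3, a₂ = V 0 2 − V 1 3, a₃ = V 0 3 + V 1 2 and b₁ = V 0 1 − V 2 3, b₂ = V 0 2 + V 1 3, b₃ = V 0 3 − V 1 2. -/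
open Matrix

/-!
Write `a`, `b` for the self-dual and anti-self-dual triples of `V`. The corresponding parts of `V`
commute, each squares to a scalar matrix, and the nine entries of the traceless part of `V * V`
are, up to an invertible linear change, the products `aᵢ * bⱼ`. Hence `V * V = 0` exactly when all
`aᵢ * bⱼ = 0` and `∑ aᵢ² + ∑ bⱼ² = 0` (`sq_zero_iff_products`). Over a field the vanishing of all
products forces one of the triples to be zero, and the trace equation then makes the other one null.
-/

/-- The equation `V * V = 0` in chiral coordinates: nine products (the traceless part) together
with the trace. -/
lemma sq_zero_iff_products (V : Matrix (Fin 4) (Fin 4) ℂ) (h1 : Vᵀ = -V)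
    (a b : Fin 3 → ℂ)
    (ha : a = ![V 0 1 + V 2 3, V 0 2 - V 1 3, V 0 3 + V 1 2])
    (hb : b = ![V 0 1 - V 2 3, V 0 2 + V 1 3, V 0 3 - V 1 2]) :
    V * V = 0 ↔ (∀ i j, a i * b j = 0) ∧
      a 0 ^ 2 + a 1 ^ 2 + a 2 ^ 2 + (b 0 ^ 2 + b 1 ^ 2 + b 2 ^ 2) = 0 := by
  have anti : ∀ i j, V j i = -V i j := fun i j => congrFun (congrFun h1 i) j
  have diag : ∀ i, V i i = 0 := fun i => self_eq_neg.mp (anti i i)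
  have h10 := anti 0 1
  have h20 := anti 0 2
  have h30 := anti 0 3
  have h21 := anti 1 2
  have h31 := anti 1 3
  have h32 := anti 2 3
  subst ha hb
  rw [← Matrix.ext_iff]
  simp only [Fin.forall_fin_succ, Matrix.mul_apply, Fin.sum_univ_succ]
  simp [-mul_eq_zero, diag, h10, h20, h30, h21, h31, h32]
  generalize V 0 1 = p
  generalize V 0 2 = q
  generalize V 0 3 = r
  generalize V 1 2 = s
  generalize V 1 3 = t
  generalize V 2 3 = u
  -- Each side is an invertible linear recombination of the other.
  constructor
  · rintro ⟨⟨_, _, _, _⟩, ⟨_, _, _, _⟩, ⟨_, _, _, _⟩, _, _, _, _⟩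
    refine ⟨⟨⟨?_, ?_, ?_⟩, ⟨?_, ?_, ?_⟩, ?_, ?_, ?_⟩, ?_⟩ <;> grind
  · rintro ⟨⟨⟨_, _, _⟩, ⟨_, _, _⟩, _, _, _⟩, _⟩
    refine ⟨⟨?_, ?_, ?_, ?_⟩, ⟨?_, ?_, ?_, ?_⟩, ⟨?_, ?_, ?_, ?_⟩, ?_, ?_, ?_, ?_⟩ <;> grind

/-- The Higgs branch of SU(2) with 2 flavours is the union of two cones: a 4×4 complex
antisymmetric matrix V satisfies V² = 0 iff either the self-dual triple a(V) vanishes and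
the anti-self-dual triple b(V) is null, or b(V) vanishes and a(V) is null. -/
theorem sq_zero_iff_two_cones (V : Matrix (Fin 4) (Fin 4) ℂ) (h1 : Vᵀ = -V) :
    V * V = 0 ↔
      ((V 0 1 + V 2 3 = 0 ∧ V 0 2 - V 1 3 = 0 ∧ V 0 3 + V 1 2 = 0 ∧
          (V 0 1 - V 2 3) ^ 2 + (V 0 2 + V 1 3) ^ 2 + (V 0 3 - V 1 2) ^ 2 = 0) ∨
       (V 0 1 - V 2 3 = 0 ∧ V 0 2 + V 1 3 = 0 ∧ V 0 3 - V 1 2 = 0 ∧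
          (V 0 1 + V 2 3) ^ 2 + (V 0 2 - V 1 3) ^ 2 + (V 0 3 + V 1 2) ^ 2 = 0)) := by
  rw [sq_zero_iff_products V h1 _ _ rfl rfl]
  simp only [Fin.forall_fin_succ, IsEmpty.forall_iff, and_true]
  simp
  generalize V 0 1 + V 2 3 = a₁
  generalize V 0 2 - V 1 3 = a₂
  generalize V 0 3 + V 1 2 = a₃
  generalize V 0 1 - V 2 3 = b₁
  generalize V 0 2 + V 1 3 = b₂
  generalize V 0 3 - V 1 2 = b₃
  grind
end

section
/- Let k, N be positive integers and let M be an N×N complex matrix with Mᵀ = −M, M * M = 0 and rank M ≤ 2k. Then there exists an N×2k complex matrix Q with Qᵀ * Q = 0 and M = Q * J * Qᵀ, where J = [[0, I_k], [−I_k, 0]] is the standard 2k×2k symplectic matrix. -/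
/-!
An antisymmetric matrix of rank at most `2k` is a sum of `k` elementary antisymmetric matrices
`p qᵀ - q pᵀ` with all `p`, `q` in the range of `M` (`exists_symplectic_decomposition`, by symplectic
Gaussian elimination: each step with a nonzero pivot lowers the rank by two). Taking the vectors `p`
and `q` as the two blocks of columns of `Q` gives `M = Q J Qᵀ`. Any two vectors `M x`, `M y` satisfy
`(M x) ⬝ (M y) = xᵀ Mᵀ M y = -xᵀ M² y = 0`, so that `Qᵀ Q = 0` is automatic.
-/

open Matrix

/-- The standard 2k×2k symplectic matrix J = [[0, I_k], [−I_k, 0]] over ℂ. -/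
def symplecticJ (k : ℕ) : Matrix (Fin k ⊕ Fin k) (Fin k ⊕ Fin k) ℂ :=
  Matrix.fromBlocks 0 1 (-1) 0

/-- The elimination step: `M` minus `a⁻¹ (u vᵀ - v uᵀ)`, where `u`, `v` are the columns `i`, `j`
of `M` and the pivot is `a = M i j`. -/
noncomputable def pivotReduce {N : ℕ} (M : Matrix (Fin N) (Fin N) ℂ) (i j : Fin N) :
    Matrix (Fin N) (Fin N) ℂ :=
  Matrix.of fun r s => M r s - (M i j)⁻¹ * (M r i * M s j - M r j * M s i)

theorem pivotReduce_transpose {N : ℕ} (M : Matrix (Fin N) (Fin N) ℂ) (i j : Fin N)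
    (h : Mᵀ = -M) : (pivotReduce M i j)ᵀ = -pivotReduce M i j := by
  ext r s
  have hrs : M s r = -M r s := congrFun (congrFun h r) s
  simp only [pivotReduce, Matrix.transpose_apply, Matrix.of_apply, Matrix.neg_apply, hrs]
  ring

theorem col_mem_range {N : ℕ} (M : Matrix (Fin N) (Fin N) ℂ) (i : Fin N) :
    (fun r => M r i) ∈ LinearMap.range M.mulVecLin :=
  ⟨Pi.single i 1, by ext r; simp⟩

theorem range_pivotReduce_le {N : ℕ} (M : Matrix (Fin N) (Fin N) ℂ) (i j : Fin N) :
    LinearMap.range (pivotReduce M i j).mulVecLin ≤ LinearMap.range M.mulVecLin := by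
  rw [Matrix.range_mulVecLin, Submodule.span_le]
  rintro _ ⟨s, rfl⟩
  have : (pivotReduce M i j).col s = (fun r => M r s)
      - ((M i j)⁻¹ * M s j) • (fun r => M r i) + ((M i j)⁻¹ * M s i) • (fun r => M r j) := by
    ext r
    simp [pivotReduce]
    ring
  rw [this]
  exact add_mem (sub_mem (col_mem_range M s) (Submodule.smul_mem _ _ (col_mem_range M i)))
    (Submodule.smul_mem _ _ (col_mem_range M j))

/-- Rows `i` and `j` of the reduced matrix vanish, so its range lies in the subspace of `range M`
cut out by `w i = 0` and `w j = 0`; columns `i` and `j` of `M` show that both cuts are proper. -/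
theorem rank_pivotReduce_add_two_le {N : ℕ} (M : Matrix (Fin N) (Fin N) ℂ) (i j : Fin N)
    (h : Mᵀ = -M) (hij : M i j ≠ 0) : (pivotReduce M i j).rank + 2 ≤ M.rank := by
  have anti : ∀ r s, M s r = -M r s := fun r s => congrFun (congrFun h r) s
  have diag : ∀ r, M r r = 0 := fun r => self_eq_neg.mp (anti r r)
  let A0 := LinearMap.range M.mulVecLin
  let A1 := A0 ⊓ LinearMap.ker (LinearMap.proj i : (Fin N → ℂ) →ₗ[ℂ] ℂ)
  let A2 := A1 ⊓ LinearMap.ker (LinearMap.proj j : (Fin N → ℂ) →ₗ[ℂ] ℂ)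
  have h01 : A1 < A0 := by
    refine lt_of_le_of_ne inf_le_left fun e => hij ?_
    have : (fun r => M r j) ∈ A1 := by rw [e]; exact col_mem_range M j
    exact this.2
  have h12 : A2 < A1 := by
    refine lt_of_le_of_ne inf_le_left fun e => hij ?_
    have : (fun r => M r i) ∈ A2 := by rw [e]; exact ⟨col_mem_range M i, diag i⟩
    have h0 : M j i = 0 := this.2
    rw [anti j i, h0, neg_zero]
  have hle : LinearMap.range (pivotReduce M i j).mulVecLin ≤ A2 := by
    have row_i : ∀ s, pivotReduce M i j i s = 0 := by
      intro s
      simp only [pivotReduce, Matrix.of_apply, diag i, anti i s]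
      field_simp
      ring
    have row_j : ∀ s, pivotReduce M i j j s = 0 := by
      intro s
      simp only [pivotReduce, Matrix.of_apply, diag j, anti i j, anti j s]
      field_simp
      ring
    rintro _ ⟨x, rfl⟩
    refine ⟨⟨range_pivotReduce_le M i j ⟨x, rfl⟩, ?_⟩, ?_⟩
    · simp [Matrix.mulVec, dotProduct, row_i]
    · simp [Matrix.mulVec, dotProduct, row_j]
  have d1 := Submodule.finrank_lt_finrank_of_lt h01
  have d2 := Submodule.finrank_lt_finrank_of_lt h12
  have d3 := Submodule.finrank_mono hle
  change Module.finrank ℂ (LinearMap.range (pivotReduce M i j).mulVecLin) + 2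
    ≤ Module.finrank ℂ A0
  omega

theorem exists_symplectic_decomposition {N : ℕ} (k : ℕ) (M : Matrix (Fin N) (Fin N) ℂ)
    (h : Mᵀ = -M) (hr : M.rank ≤ 2 * k) :
    ∃ p q : Fin k → Fin N → ℂ,
      (∀ l, p l ∈ LinearMap.range M.mulVecLin) ∧ (∀ l, q l ∈ LinearMap.range M.mulVecLin) ∧
      ∀ r s, M r s = ∑ l, (p l r * q l s - q l r * p l s) := by
  induction k generalizing M with
  | zero =>
    have hbot : LinearMap.range M.mulVecLin = ⊥ :=
      Submodule.finrank_eq_zero.mp (Nat.le_zero.mp hr)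
    have hM : M = 0 := by
      ext r s
      have hs := col_mem_range M s
      rw [hbot, Submodule.mem_bot] at hs
      exact congrFun hs r
    exact ⟨0, 0, fun l => l.elim0, fun l => l.elim0, by simp [hM]⟩
  | succ k ih =>
    by_cases hM : M = 0
    · exact ⟨0, 0, fun _ => zero_mem _, fun _ => zero_mem _, by simp [hM]⟩
    obtain ⟨i, j, hij⟩ : ∃ i j, M i j ≠ 0 := by
      by_contra! hc
      exact hM (Matrix.ext hc)
    have hrank := rank_pivotReduce_add_two_le M i j h hij
    obtain ⟨p, q, hp, hq, hpq⟩ :=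
      ih (pivotReduce M i j) (pivotReduce_transpose M i j h) (by omega)
    refine ⟨Fin.cons ((M i j)⁻¹ • fun r => M r i) p, Fin.cons (fun r => M r j) q, ?_, ?_, ?_⟩
    · exact Fin.cases (Submodule.smul_mem _ _ (col_mem_range M i))
        fun l => range_pivotReduce_le M i j (hp l)
    · exact Fin.cases (col_mem_range M j) fun l => range_pivotReduce_le M i j (hq l)
    · intro r s
      rw [Fin.sum_univ_succ]
      simp only [Fin.cons_zero, Fin.cons_succ, ← hpq, pivotReduce, Matrix.of_apply,
        Pi.smul_apply, smul_eq_mul]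
      ring

theorem dotProduct_eq_zero_of_mem_range {N : ℕ} (M : Matrix (Fin N) (Fin N) ℂ)
    (h1 : Mᵀ = -M) (h2 : M * M = 0) {v w : Fin N → ℂ}
    (hv : v ∈ LinearMap.range M.mulVecLin) (hw : w ∈ LinearMap.range M.mulVecLin) :
    v ⬝ᵥ w = 0 := by
  obtain ⟨x, rfl⟩ := hv
  obtain ⟨y, rfl⟩ := hw
  rw [Matrix.mulVecLin_apply, Matrix.mulVecLin_apply, Matrix.dotProduct_mulVec,
    ← Matrix.mulVec_transpose, h1, Matrix.neg_mulVec, Matrix.mulVec_mulVec, h2]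
  simp

/-- Converse F-term analysis for Sp(k) with SO(N) flavour symmetry: every antisymmetric
N×N complex matrix M with M² = 0 and rank M ≤ 2k arises as the meson M = Q J Qᵀ of some
F-flat N×2k matrix Q (i.e. QᵀQ = 0). -/
theorem spk_meson_surjective (k N : ℕ) (hk : 0 < k) (hN : 0 < N)
    (M : Matrix (Fin N) (Fin N) ℂ) (h1 : Mᵀ = -M) (h2 : M * M = 0)
    (h3 : M.rank ≤ 2 * k) :
    ∃ Q : Matrix (Fin N) (Fin k ⊕ Fin k) ℂ,
      Qᵀ * Q = 0 ∧ M = Q * symplecticJ k * Qᵀ := by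
  obtain ⟨p, q, hp, hq, hpq⟩ := exists_symplectic_decomposition k M h1 h3
  refine ⟨(Matrix.of (Sum.elim p q))ᵀ, ?_, ?_⟩
  · have hcol : ∀ l, Sum.elim p q l ∈ LinearMap.range M.mulVecLin := by
      rintro (l | l)
      exacts [hp l, hq l]
    ext a b
    exact dotProduct_eq_zero_of_mem_range M h1 h2 (hcol a) (hcol b)
  · ext r s
    rw [hpq]
    simp [Matrix.mul_apply, symplecticJ, Matrix.one_apply, Finset.sum_sub_distrib]
    ring
end

section
/- Let k, N be positive integers and M an N×N complex matrix. Then (trace M = 0 and M * M = 0 and rank M ≤ k) if and only if there exist complex matrices Q of size N×k and Q̃ of size k×N with Q̃ * Q = 0 and M = Q * Q̃. -/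
open Matrix

/-!
If `M = Q Q̃` with `Q̃ Q = 0`, then `Tr M = Tr (Q̃ Q) = 0`, `M² = Q (Q̃ Q) Q̃ = 0`, and
`rank M ≤ rank Q ≤ k`.

Conversely, let `V` be the range of `M`, seen as an endomorphism of `ℂ^N`. As `dim V ≤ k`, there
are an injection `i : V → ℂ^k` and a retraction `p : ℂ^k → V` of it. Take `Q̃ = i ∘ M` (with `M`
corestricted to `V`) and let `Q` be `p` followed by the inclusion of `V`. Then `Q Q̃ = M` since
`p ∘ i = id`, and `Q̃ Q = i ∘ M|_V ∘ p = 0` since `M² = 0` says that `M` vanishes on `V`.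
-/

/-- Higgs branch of U(k) with N fundamental flavours: an N×N complex matrix M satisfies
Tr M = 0, M² = 0 and rank M ≤ k iff M = Q Q̃ for half-hypermultiplet matrices Q (N×k) and
Q̃ (k×N) satisfying the F-term Q̃ Q = 0. -/
theorem uk_higgs_branch_variety (k N : ℕ) (hk : 0 < k) (hN : 0 < N)
    (M : Matrix (Fin N) (Fin N) ℂ) :
    (M.trace = 0 ∧ M * M = 0 ∧ M.rank ≤ k) ↔
      ∃ (Q : Matrix (Fin N) (Fin k) ℂ) (Qt : Matrix (Fin k) (Fin N) ℂ),
        Qt * Q = 0 ∧ M = Q * Qt := by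
  constructor
  · rintro ⟨-, hsq, hrank⟩
    set f := Matrix.toLin' M with hf
    have hff : ∀ x, f (f x) = 0 := by
      intro x
      simp [hf, Matrix.toLin'_apply, Matrix.mulVec_mulVec, hsq]
    have hdim : Module.finrank ℂ (LinearMap.range f) ≤ Module.finrank ℂ (Fin k → ℂ) := by
      rw [Module.finrank_fin_fun]
      exact hrank
    obtain ⟨i, hi⟩ : ∃ i : LinearMap.range f →ₗ[ℂ] (Fin k → ℂ), Function.Injective i := by
      rw [← rank_le_iff_exists_linearMap, ← Module.finrank_eq_rank, ← Module.finrank_eq_rank]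
      exact_mod_cast hdim
    obtain ⟨p, hp⟩ := i.exists_leftInverse_of_injective (LinearMap.ker_eq_bot.mpr hi)
    refine ⟨LinearMap.toMatrix' ((LinearMap.range f).subtype ∘ₗ p),
      LinearMap.toMatrix' (i ∘ₗ f.rangeRestrict), ?_, ?_⟩
    · rw [← LinearMap.toMatrix'_comp]
      have h0 : f.rangeRestrict ∘ₗ (LinearMap.range f).subtype = 0 := by
        refine LinearMap.ext ?_
        rintro ⟨_, x, rfl⟩
        exact Subtype.ext (hff x)
      have : (i ∘ₗ f.rangeRestrict) ∘ₗ ((LinearMap.range f).subtype ∘ₗ p)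
          = i ∘ₗ (f.rangeRestrict ∘ₗ (LinearMap.range f).subtype) ∘ₗ p := rfl
      rw [this, h0]
      simp
    · rw [← LinearMap.toMatrix'_comp]
      have : ((LinearMap.range f).subtype ∘ₗ p) ∘ₗ (i ∘ₗ f.rangeRestrict)
          = (LinearMap.range f).subtype ∘ₗ (p ∘ₗ i) ∘ₗ f.rangeRestrict := rfl
      rw [this, hp, LinearMap.id_comp, LinearMap.subtype_comp_codRestrict, hf,
        LinearMap.toMatrix'_toLin']
  · rintro ⟨Q, Qt, h, rfl⟩
    refine ⟨?_, ?_, ?_⟩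
    · rw [Matrix.trace_mul_comm, h, Matrix.trace_zero]
    · rw [Matrix.mul_assoc, ← Matrix.mul_assoc Qt, h, Matrix.zero_mul, Matrix.mul_zero]
    · exact (Matrix.rank_mul_le_left Q Qt).trans (by simpa using Q.rank_le_card_width)
end

section
/- Let k, N be positive integers, let Ω = [[0, I_N], [−I_N, 0]] be the standard 2N×2N symplectic matrix over ℂ, and let M be a 2N×2N complex matrix. Then (Mᵀ = M and M * Ω * M = 0 and rank M ≤ k) if and only if there exists a 2N×k complex matrix Q with Qᵀ * Ω * Q = 0 and M = Q * Qᵀ. -/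
/-!
If `M = Q Qᵀ` with `Qᵀ Ω Q = 0`, the three conditions on `M` are immediate.

Conversely, a complex symmetric `M` is congruent to a diagonal matrix: `M = P D Pᵀ` with `P`
invertible (`exists_congruent_diagonal`). Cancelling `P` in `M Ω M = 0` gives
`dᵢ (Pᵀ Ω P)ᵢⱼ dⱼ = 0` for all `i, j`, so with `eᵢ² = dᵢ` also `eᵢ (Pᵀ Ω P)ᵢⱼ eⱼ = 0`.
Exactly `rank M ≤ k` of the `dᵢ` are nonzero; the columns `eᵢ Pᵢ` for these `i`, placed injectively
among `k` slots and padded by zero columns, form the required `Q`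
(`exists_partial_injection_matrix`).
-/

open Matrix

/-- The standard 2N×2N symplectic matrix Ω = [[0, I_N], [−I_N, 0]] over ℂ. -/
def symplecticOmega (N : ℕ) : Matrix (Fin N ⊕ Fin N) (Fin N ⊕ Fin N) ℂ :=
  Matrix.fromBlocks 0 1 (-1) 0

/-- The columns of `(Pᵀ)⁻¹` are a basis orthogonal for the symmetric bilinear form of `M`. -/
lemma exists_congruent_diagonal {ι : Type*} [Fintype ι] [DecidableEq ι]
    (M : Matrix ι ι ℂ) (hM : Mᵀ = M) :
    ∃ (P : Matrix ι ι ℂ) (d : ι → ℂ), IsUnit P.det ∧ M = P * diagonal d * Pᵀ := by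
  have hB : LinearMap.IsSymm (Matrix.toBilin' M) := by
    constructor
    intro x y
    simp only [Matrix.toBilin'_apply', RingHom.id_apply]
    rw [dotProduct_comm, dotProduct_mulVec, ← mulVec_transpose, hM]
  obtain ⟨v₀, hv₀⟩ := LinearMap.BilinForm.exists_orthogonal_basis hB
  let v : Module.Basis ι ℂ (ι → ℂ) := v₀.reindex (Fintype.equivOfCardEq (by simp))
  have hv : ∀ i j, i ≠ j → v i ⬝ᵥ M *ᵥ v j = 0 := by
    intro i j hij
    have := hv₀ (i := (Fintype.equivOfCardEq (by simp)).symm i)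
      (j := (Fintype.equivOfCardEq (by simp)).symm j) (by simpa using hij)
    simpa [v, Matrix.toBilin'_apply', Function.onFun] using this
  let R : Matrix ι ι ℂ := (Pi.basisFun ℂ ι).toMatrix v
  have hR : IsUnit R.det := by
    have : Invertible R := (Pi.basisFun ℂ ι).invertibleToMatrix v
    exact (Matrix.isUnit_iff_isUnit_det R).1 (isUnit_of_invertible R)
  have hD : Rᵀ * M * R = diagonal fun i => v i ⬝ᵥ M *ᵥ v i := by
    ext i j
    have h : (Rᵀ * M * R) i j = v i ⬝ᵥ M *ᵥ v j := by
      rw [Matrix.mul_assoc]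
      rfl
    rw [h, diagonal_apply]
    split_ifs with hij
    · rw [hij]
    · exact hv i j hij
  have hRt : IsUnit Rᵀ.det := by rwa [det_transpose]
  refine ⟨R⁻¹ᵀ, fun i => v i ⬝ᵥ M *ᵥ v i,
    by rw [det_transpose]; exact isUnit_nonsing_inv_det R hR, ?_⟩
  rw [← hD, transpose_transpose, transpose_nonsing_inv, Matrix.mul_assoc, Matrix.mul_assoc,
    mul_nonsing_inv R hR, Matrix.mul_one, ← Matrix.mul_assoc, nonsing_inv_mul _ hRt,
    Matrix.one_mul]

/-- The 0-1 matrix `S` of an injection from the support of `e` into `Fin k`, so that `S Sᵀ` is the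
projection onto the coordinates in that support. -/
lemma exists_partial_injection_matrix {ι : Type*} [Fintype ι] [DecidableEq ι] (k : ℕ) (e : ι → ℂ)
    (h : Fintype.card {i // e i ≠ 0} ≤ k) :
    ∃ S : Matrix ι (Fin k) ℂ,
      diagonal e * (S * Sᵀ) * diagonal e = diagonal fun i => e i * e i := by
  obtain ⟨f⟩ : Nonempty ({i // e i ≠ 0} ↪ Fin k) :=
    Function.Embedding.nonempty_of_card_le (by simpa using h)
  refine ⟨of fun i a => if hi : e i ≠ 0 then (if f ⟨i, hi⟩ = a then 1 else 0) else 0, ?_⟩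
  ext i j
  rw [mul_diagonal, diagonal_mul, diagonal_apply, mul_apply]
  by_cases hi : e i = 0
  · simp [hi]
  by_cases hj : e j = 0
  · have hij : i ≠ j := fun h => hi (h ▸ hj)
    simp [hj, hij]
  by_cases hij : i = j
  · subst hij
    simp [hi]
  · simp [hi, hj, hij]

/-- Higgs branch of O(k) with Sp(N) flavour symmetry: a 2N×2N complex matrix M satisfies
Mᵀ = M, M Ω M = 0 and rank M ≤ k iff M = Q Qᵀ for a 2N×k matrix Q satisfying the F-term
Qᵀ Ω Q = 0. -/
theorem ok_higgs_branch_variety (k N : ℕ) (hk : 0 < k) (hN : 0 < N)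
    (M : Matrix (Fin N ⊕ Fin N) (Fin N ⊕ Fin N) ℂ) :
    (Mᵀ = M ∧ M * symplecticOmega N * M = 0 ∧ M.rank ≤ k) ↔
      ∃ Q : Matrix (Fin N ⊕ Fin N) (Fin k) ℂ,
        Qᵀ * symplecticOmega N * Q = 0 ∧ M = Q * Qᵀ := by
  constructor
  · rintro ⟨hsymm, hnil, hrank⟩
    obtain ⟨P, d, hP, hM⟩ := exists_congruent_diagonal M hsymm
    have hPt : IsUnit Pᵀ.det := by rwa [det_transpose]
    choose e he using fun i => IsAlgClosed.exists_eq_mul_self (d i)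
    have hde : diagonal d = diagonal fun i => e i * e i := by
      congr 1
      exact funext he
    have hcard : Fintype.card {i // e i ≠ 0} ≤ k := by
      have hr : M.rank = Fintype.card {i // e i * e i ≠ 0} := by
        rw [hM, rank_mul_eq_left_of_isUnit_det _ _ hPt, rank_mul_eq_right_of_isUnit_det _ _ hP,
          hde, rank_diagonal]
      rw [hr] at hrank
      simpa using hrank
    obtain ⟨S, hS⟩ := exists_partial_injection_matrix k e hcard
    have hW : diagonal d * (Pᵀ * symplecticOmega N * P) * diagonal d = 0 := by
      have h : P * (diagonal d * (Pᵀ * symplecticOmega N * P) * diagonal d) * Pᵀ = 0 := by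
        rw [← hnil, hM]
        simp only [Matrix.mul_assoc]
      generalize diagonal d * (Pᵀ * symplecticOmega N * P) * diagonal d = X at h ⊢
      calc X = P⁻¹ * (P * X * Pᵀ) * Pᵀ⁻¹ := by
            rw [Matrix.mul_assoc P, nonsing_inv_mul_cancel_left P _ hP,
              mul_nonsing_inv_cancel_right _ _ hPt]
        _ = 0 := by rw [h, Matrix.mul_zero, Matrix.zero_mul]
    have hE : diagonal e * (Pᵀ * symplecticOmega N * P) * diagonal e = 0 := by
      ext i j
      have h := congrFun (congrFun hW i) j
      rw [mul_diagonal, diagonal_mul, Matrix.zero_apply, he i, he j] at h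
      rw [mul_diagonal, diagonal_mul, Matrix.zero_apply]
      simpa using h
    refine ⟨P * diagonal e * S, ?_, ?_⟩
    · calc (P * diagonal e * S)ᵀ * symplecticOmega N * (P * diagonal e * S)
          = Sᵀ * (diagonal e * (Pᵀ * symplecticOmega N * P) * diagonal e) * S := by
            simp only [transpose_mul, diagonal_transpose, Matrix.mul_assoc]
        _ = 0 := by rw [hE, Matrix.mul_zero, Matrix.zero_mul]
    · rw [hM, hde, ← hS]
      simp only [transpose_mul, diagonal_transpose, Matrix.mul_assoc]
  · rintro ⟨Q, hQ, rfl⟩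
    refine ⟨by rw [transpose_mul, transpose_transpose], ?_, ?_⟩
    · calc Q * Qᵀ * symplecticOmega N * (Q * Qᵀ)
          = Q * (Qᵀ * symplecticOmega N * Q) * Qᵀ := by simp only [Matrix.mul_assoc]
        _ = 0 := by rw [hQ, Matrix.mul_zero, Matrix.zero_mul]
    · exact (rank_mul_le_left Q Qᵀ).trans (by simpa using rank_le_card_width Q)
end

section
/- Let S = {V ∈ ℂ^{4×4} : Vᵀ = −V and V * V = 0}, a cone in the 6-dimensional space of antisymmetric matrices. For each d ≥ 1, the complex vector space of functions S → ℂ obtained by restricting homogeneous degree-d polynomials in the six entries V01, V02, V03, V12, V13, V23 to S has dimension 4d + 2 (and dimension 1 for d = 0). Equivalently, the space of homogeneous degree-d polynomials in six variables vanishing identically on S has dimension C(d+5, 5) − (4d + 2) for d ≥ 1. -/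
/-!
The six entries of an antisymmetric `V` split into a self-dual and an anti-self-dual triple,
`(V01 + ε V23, V02 - ε V13, V03 + ε V12)` for `ε = 1` and `ε = -1`. The equation `V * V = 0` says
that every product of a component of one triple with a component of the other vanishes and that
both triples are null vectors. So the branch is the union of two quadric cones `x² + y² + z² = 0`
meeting at the origin (`mem_higgs_exists_cone`, `coneMatrix_mem`), and each cone is parametrised
by `(s, t) ↦ (s² - t², i(s² + t²), 2st)`.

Pulling polynomials back along the two parametrisations gives `bothCones`, a pair of algebra maps
to polynomials in `s, t`. It has the same kernel as restriction to the branch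
(`ker_restrictToHiggs`), because a polynomial over an infinite field vanishing at all points is
zero. For `d ≥ 1` it maps the degree-`d` polynomials onto all pairs of binary forms of degree `2d`
(`map_bothCones`): each of `s²`, `st`, `t²` on one cone is the restriction of a linear form vanishing
on the other cone, and products of `d ≥ 1` such forms give every monomial of degree `2d`. Hence the
dimension is `2(2d + 1)`, and rank-nullity gives the dimension of the vanishing polynomials.
-/

open Matrix MvPolynomial

/-- The Higgs branch of SU(2) with 2 flavours: antisymmetric 4×4 complex matrices that
square to zero. -/
def higgsBranchSU2 : Set (Matrix (Fin 4) (Fin 4) ℂ) :=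
  {V | Vᵀ = -V ∧ V * V = 0}

/-- The six independent entries of an antisymmetric 4×4 matrix. -/
def entriesOf (V : Matrix (Fin 4) (Fin 4) ℂ) : Fin 6 → ℂ :=
  ![V 0 1, V 0 2, V 0 3, V 1 2, V 1 3, V 2 3]

/-- The linear map restricting a polynomial in the six entries V01, V02, V03, V12, V13,
V23 to a function on the Higgs branch. -/
noncomputable def restrictToHiggs :
    MvPolynomial (Fin 6) ℂ →ₗ[ℂ] (higgsBranchSU2 → ℂ) :=
  LinearMap.pi fun V => (MvPolynomial.aeval (entriesOf V.1)).toLinearMap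

/-! ### Dimension counts -/

theorem finrank_homogeneousSubmodule (n d : ℕ) :
    Module.finrank ℂ (homogeneousSubmodule (Fin n) ℂ d) = (n + d - 1).choose d := by
  have hset : {e : Fin n →₀ ℕ | e.degree = d} =
      ((Finset.univ.finsuppAntidiag d : Finset (Fin n →₀ ℕ)) : Set (Fin n →₀ ℕ)) := by
    ext e
    simp [Finsupp.degree_eq_sum]
  rw [homogeneousSubmodule_eq_finsupp_supported, hset,
    (AddMonoidAlgebra.supportedEquivFinsupp _).finrank_eq, Module.finrank_finsupp_self]
  simp [Finset.card_finsuppAntidiag_nat_eq_choose]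

instance finite_homogeneousSubmodule (n d : ℕ) :
    Module.Finite ℂ (homogeneousSubmodule (Fin n) ℂ d) :=
  Module.Finite.iff_fg.mpr (homogeneousSubmodule_fg _ _ d)

theorem finrank_map_add_finrank_inf_ker {M N : Type*} [AddCommGroup M] [Module ℂ M]
    [AddCommGroup N] [Module ℂ N] (f : M →ₗ[ℂ] N) (H : Submodule ℂ M) [Module.Finite ℂ H] :
    Module.finrank ℂ (H.map f) + Module.finrank ℂ ↥(H ⊓ LinearMap.ker f) =
      Module.finrank ℂ H := by
  rw [← LinearMap.finrank_range_add_finrank_ker (f.domRestrict H), LinearMap.range_domRestrict]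
  congr 1
  have h : (LinearMap.ker (f.domRestrict H)).map H.subtype = H ⊓ LinearMap.ker f := by
    ext x
    simp [and_comm]
  rw [← h, Submodule.finrank_map_subtype_eq]

theorem finrank_submodule_prod {M N : Type*} [AddCommGroup M] [Module ℂ M]
    [AddCommGroup N] [Module ℂ N] (p : Submodule ℂ M) (q : Submodule ℂ N)
    [Module.Finite ℂ p] [Module.Finite ℂ q] :
    Module.finrank ℂ (p.prod q) = Module.finrank ℂ p + Module.finrank ℂ q := by
  have h : LinearMap.range (p.subtype.prodMap q.subtype) = p.prod q := by
    simp [LinearMap.range_prodMap]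
  rw [← h, LinearMap.finrank_range_of_inj, Module.finrank_prod]
  exact Prod.map_injective.mpr ⟨p.injective_subtype, q.injective_subtype⟩

/-! ### The two cones -/

/-- The six entries of the point with parameters `s, t` on the cone of sign `ε = ±1`, over any
`ℂ`-algebra. -/
noncomputable def conePoint {A : Type*} [CommRing A] [Algebra ℂ A] (ε : ℂ) (s t : A) : Fin 6 → A :=
  ![s ^ 2 - t ^ 2, Complex.I • (s ^ 2 + t ^ 2), 2 * (s * t),
    ε • (2 * (s * t)), -(ε • Complex.I • (s ^ 2 + t ^ 2)), ε • (s ^ 2 - t ^ 2)]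

/-- The antisymmetric matrix with given upper-triangular entries. -/
def antisymmOf (v : Fin 6 → ℂ) : Matrix (Fin 4) (Fin 4) ℂ :=
  !![0, v 0, v 1, v 2; -v 0, 0, v 3, v 4; -v 1, -v 3, 0, v 5; -v 2, -v 4, -v 5, 0]

theorem entriesOf_antisymmOf (v : Fin 6 → ℂ) : entriesOf (antisymmOf v) = v := by
  ext i
  fin_cases i <;> simp [entriesOf, antisymmOf]

theorem coneMatrix_mem {ε : ℂ} (hε : ε ^ 2 = 1) (s t : ℂ) :
    antisymmOf (conePoint ε s t) ∈ higgsBranchSU2 := by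
  have hI : Complex.I ^ 2 = -1 := Complex.I_sq
  refine ⟨?_, ?_⟩
  · ext i j
    fin_cases i <;> fin_cases j <;> simp [antisymmOf]
  · ext i j
    fin_cases i <;> fin_cases j <;>
      simp [antisymmOf, conePoint, Matrix.mul_apply, Fin.sum_univ_four] <;> grind

theorem exists_null_param {x y z : ℂ} (h : x ^ 2 + y ^ 2 + z ^ 2 = 0) :
    ∃ s t : ℂ, x = s ^ 2 - t ^ 2 ∧ y = Complex.I * (s ^ 2 + t ^ 2) ∧ z = 2 * (s * t) := by
  have hI : Complex.I ^ 2 = -1 := Complex.I_sq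
  -- The values forced on `s²` and `t²`; then `(2st)² = z²`, so flipping `t` fixes the sign.
  obtain ⟨s, hs⟩ := IsAlgClosed.exists_pow_nat_eq ((x - Complex.I * y) / 2) (n := 2) (by norm_num)
  obtain ⟨t, ht⟩ := IsAlgClosed.exists_pow_nat_eq ((-x - Complex.I * y) / 2) (n := 2) (by norm_num)
  have hz : (z - 2 * (s * t)) * (z + 2 * (s * t)) = 0 := by
    have : (z - 2 * (s * t)) * (z + 2 * (s * t)) = z ^ 2 - 4 * (s ^ 2 * t ^ 2) := by ring
    rw [this, hs, ht]
    linear_combination h - y ^ 2 * hI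
  rcases mul_eq_zero.mp hz with hz | hz
  · refine ⟨s, t, ?_, ?_, by linear_combination hz⟩
    · rw [hs, ht]; ring
    · rw [hs, ht]; linear_combination y * hI
  · refine ⟨s, -t, ?_, ?_, by linear_combination hz⟩
    · rw [neg_sq, hs, ht]; ring
    · rw [neg_sq, hs, ht]; linear_combination y * hI

theorem mem_higgs_exists_cone {V : Matrix (Fin 4) (Fin 4) ℂ} (hV : V ∈ higgsBranchSU2) :
    ∃ ε : ℂ, (ε = 1 ∨ ε = -1) ∧ ∃ s t : ℂ, entriesOf V = conePoint ε s t := by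
  obtain ⟨hT, hsq⟩ := hV
  have anti : ∀ i j, V j i = -V i j := fun i j => congrFun (congrFun hT i) j
  have diag : ∀ i, V i i = 0 := fun i => self_eq_neg.mp (anti i i)
  have sq : ∀ i j, V i 0 * V 0 j + V i 1 * V 1 j + V i 2 * V 2 j + V i 3 * V 3 j = 0 := by
    intro i j
    have := congrFun (congrFun hsq i) j
    simpa [Matrix.mul_apply, Fin.sum_univ_four] using this
  have h00 := sq 0 0
  have h11 := sq 1 1
  have h22 := sq 2 2
  have h33 := sq 3 3
  have h01 := sq 0 1
  have h02 := sq 0 2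
  have h03 := sq 0 3
  have h12 := sq 1 2
  have h13 := sq 1 3
  have h23 := sq 2 3
  simp only [diag, anti 0 1, anti 0 2, anti 0 3, anti 1 2, anti 1 3, anti 2 3]
    at h00 h11 h22 h33 h01 h02 h03 h12 h13 h23
  unfold entriesOf
  generalize V 0 1 = a, V 0 2 = b, V 0 3 = c, V 1 2 = e, V 1 3 = f, V 2 3 = g at *
  obtain ⟨s, t, ha, hb, hc⟩ := exists_null_param (x := a) (y := b) (z := c)
    (by linear_combination -h00)
  -- Every product of a self-dual component with an anti-self-dual one vanishes.
  have prod : ∀ x ∈ [a + g, b - f, c + e], ∀ y ∈ [a - g, b + f, c - e], x * y = 0 := by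
    simp only [List.mem_cons, List.not_mem_nil, or_false]
    rintro x (rfl | rfl | rfl) y (rfl | rfl | rfl) <;> grind
  have key : (a - g = 0 ∧ b + f = 0 ∧ c - e = 0) ∨ (a + g = 0 ∧ b - f = 0 ∧ c + e = 0) := by
    have cancel : ∀ x ∈ [a + g, b - f, c + e], x ≠ 0 → a - g = 0 ∧ b + f = 0 ∧ c - e = 0 :=
      fun x hx h0 => ⟨(mul_eq_zero.mp (prod x hx _ (by simp))).resolve_left h0,
        (mul_eq_zero.mp (prod x hx _ (by simp))).resolve_left h0,
        (mul_eq_zero.mp (prod x hx _ (by simp))).resolve_left h0⟩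
    by_cases h1 : a + g = 0
    · by_cases h2 : b - f = 0
      · by_cases h3 : c + e = 0
        · exact Or.inr ⟨h1, h2, h3⟩
        · exact Or.inl (cancel _ (by simp) h3)
      · exact Or.inl (cancel _ (by simp) h2)
    · exact Or.inl (cancel _ (by simp) h1)
  rcases key with ⟨h1, h2, h3⟩ | ⟨h1, h2, h3⟩
  · refine ⟨1, Or.inl rfl, s, t, ?_⟩
    ext i
    fin_cases i <;> simp [conePoint] <;> grind
  · refine ⟨-1, Or.inr rfl, s, t, ?_⟩
    ext i
    fin_cases i <;> simp [conePoint] <;> grind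

/-! ### Pulling back to the parameters -/

/-- Substitution of the parametrisation of the cone of sign `ε` into a polynomial in the six
entries; the parameters `s, t` are `X 0, X 1`. -/
noncomputable def pullback (ε : ℂ) : MvPolynomial (Fin 6) ℂ →ₐ[ℂ] MvPolynomial (Fin 2) ℂ :=
  aeval (conePoint ε (X 0) (X 1))

/-- The pullbacks to the two cones. -/
noncomputable def bothCones :
    MvPolynomial (Fin 6) ℂ →ₗ[ℂ] MvPolynomial (Fin 2) ℂ × MvPolynomial (Fin 2) ℂ :=
  (pullback 1).toLinearMap.prod (pullback (-1)).toLinearMap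

theorem eval_pullback (ε : ℂ) (v : Fin 2 → ℂ) (p : MvPolynomial (Fin 6) ℂ) :
    eval v (pullback ε p) = aeval (conePoint ε (v 0) (v 1)) p := by
  have h : (aeval v).comp (pullback ε) = aeval (conePoint ε (v 0) (v 1)) := by
    ext i
    fin_cases i <;> simp [pullback, conePoint, smul_eq_C_mul] <;> ring
  rw [← h]
  simp [aeval_eq_eval]

theorem ker_restrictToHiggs : LinearMap.ker restrictToHiggs = LinearMap.ker bothCones := by
  ext p
  have hR : restrictToHiggs p = 0 ↔ ∀ V ∈ higgsBranchSU2, aeval (entriesOf V) p = 0 := by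
    simp [restrictToHiggs, funext_iff]
  have hB : bothCones p = 0 ↔ pullback 1 p = 0 ∧ pullback (-1) p = 0 := by
    simp [bothCones, Prod.ext_iff]
  rw [LinearMap.mem_ker, LinearMap.mem_ker, hR, hB]
  constructor
  · intro h
    have aux : ∀ ε : ℂ, ε ^ 2 = 1 → pullback ε p = 0 := by
      intro ε hε
      refine MvPolynomial.funext fun v => ?_
      rw [eval_pullback, map_zero]
      simpa [entriesOf_antisymmOf] using h _ (coneMatrix_mem hε (v 0) (v 1))
    exact ⟨aux 1 (by norm_num), aux (-1) (by norm_num)⟩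
  · rintro ⟨h1, h2⟩ V hV
    obtain ⟨ε, hε, s, t, hst⟩ := mem_higgs_exists_cone hV
    have h0 : pullback ε p = 0 := by
      rcases hε with rfl | rfl <;> assumption
    simpa [h0, hst] using (eval_pullback ε ![s, t] p).symm

theorem pullback_isHomogeneous (ε : ℂ) {p : MvPolynomial (Fin 6) ℂ} {d : ℕ}
    (hp : p.IsHomogeneous d) : (pullback ε p).IsHomogeneous (2 * d) := by
  have hX : ∀ i j : Fin 2, (X i * X j : MvPolynomial (Fin 2) ℂ).IsHomogeneous 2 := fun i j =>
    (isHomogeneous_X ℂ i).mul (isHomogeneous_X ℂ j)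
  have h2 : (2 * (X 0 * X 1) : MvPolynomial (Fin 2) ℂ).IsHomogeneous 2 := by
    simpa only [map_ofNat] using (hX 0 1).C_mul 2
  refine hp.aeval _ fun i => ?_
  fin_cases i <;> simp only [conePoint, smul_eq_C_mul, sq, Fin.isValue] <;> simp
  · exact (hX 0 0).sub (hX 1 1)
  · exact ((hX 0 0).add (hX 1 1)).C_mul _
  · exact h2
  · exact h2.C_mul _
  · exact ((((hX 0 0).add (hX 1 1)).C_mul _).C_mul _).neg
  · exact ((hX 0 0).sub (hX 1 1)).C_mul _

/-- Each quadratic monomial in `s, t` on the cone of sign `ε` is the restriction of a linear form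
vanishing on the other cone. -/
theorem exists_linear_forms {ε : ℂ} (hε : ε ^ 2 = 1) :
    ∃ L : Fin 3 → MvPolynomial (Fin 6) ℂ, (∀ i, (L i).IsHomogeneous 1) ∧
      (∀ i, pullback (-ε) (L i) = 0) ∧ pullback ε (L 0) = X 0 ^ 2 ∧
      pullback ε (L 1) = X 0 * X 1 ∧ pullback ε (L 2) = X 1 ^ 2 := by
  have hI : (C Complex.I : MvPolynomial (Fin 2) ℂ) ^ 2 = -1 := by
    rw [← C_pow, Complex.I_sq]; simp
  have hE : (C ε : MvPolynomial (Fin 2) ℂ) ^ 2 = 1 := by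
    rw [← C_pow, hε]; simp
  have h4 : (C (1 / 4) : MvPolynomial (Fin 2) ℂ) * 4 = 1 := by
    rw [show (4 : MvPolynomial (Fin 2) ℂ) = C 4 from (map_ofNat C 4).symm, ← C_mul]; simp
  -- The components `x, y, z` of the triple that vanishes on the other cone, doubled on this one.
  let x : MvPolynomial (Fin 6) ℂ := X 0 + C ε * X 5
  let y : MvPolynomial (Fin 6) ℂ := X 1 - C ε * X 4
  let z : MvPolynomial (Fin 6) ℂ := X 2 + C ε * X 3
  have hx : x.IsHomogeneous 1 := (isHomogeneous_X _ _).add (isHomogeneous_C_mul_X _ _)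
  have hy : y.IsHomogeneous 1 := (isHomogeneous_X _ _).sub (isHomogeneous_C_mul_X _ _)
  have hz : z.IsHomogeneous 1 := (isHomogeneous_X _ _).add (isHomogeneous_C_mul_X _ _)
  refine ⟨![C (1 / 4) * (x - C Complex.I * y), C (1 / 4) * z,
    C (1 / 4) * (-x - C Complex.I * y)], ?_, ?_, ?_, ?_, ?_⟩
  · intro i
    fin_cases i
    · exact (hx.sub (hy.C_mul _)).C_mul _
    · exact hz.C_mul _
    · exact (hx.neg.sub (hy.C_mul _)).C_mul _
  · intro i
    fin_cases i <;>
      simp [pullback, conePoint, x, y, z, smul_eq_C_mul, algebraMap_eq, -one_div] <;> grind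
  all_goals
    simp [pullback, conePoint, x, y, z, smul_eq_C_mul, algebraMap_eq, -one_div]
    grind

theorem homogeneous_le_map_pullback {ε : ℂ} (hε : ε ^ 2 = 1) {d : ℕ} (hd : 1 ≤ d) :
    homogeneousSubmodule (Fin 2) ℂ (2 * d) ≤
      (homogeneousSubmodule (Fin 6) ℂ d ⊓ LinearMap.ker (pullback (-ε)).toLinearMap).map
        (pullback ε).toLinearMap := by
  obtain ⟨L, hL, hL0, h0, h1, h2⟩ := exists_linear_forms hε
  have mon : ∀ i j k : ℕ, i + j + k = d → ∀ q : MvPolynomial (Fin 2) ℂ,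
      q = (X 0 ^ 2) ^ i * (X 0 * X 1) ^ j * (X 1 ^ 2) ^ k →
      q ∈ (homogeneousSubmodule (Fin 6) ℂ d ⊓
        LinearMap.ker (pullback (-ε)).toLinearMap).map (pullback ε).toLinearMap := by
    rintro i j k hijk q rfl
    refine ⟨L 0 ^ i * L 1 ^ j * L 2 ^ k, ⟨?_, ?_⟩, ?_⟩
    · have := (((hL 0).pow i).mul ((hL 1).pow j)).mul ((hL 2).pow k)
      simpa [hijk] using this
    · -- At least one of the exponents is positive, so some factor vanishes.
      have : i ≠ 0 ∨ j ≠ 0 ∨ k ≠ 0 := by omega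
      simp [hL0]
      tauto
    · simp [h0, h1, h2]
  intro q hq
  rw [← q.support_sum_monomial_coeff]
  refine Submodule.sum_mem _ fun m hm => ?_
  have hdeg : m 0 + m 1 = 2 * d := by
    have := IsHomogeneous.degree_eq_sum_deg_support hq hm
    rw [this, ← Fin.sum_univ_two (fun i => m i)]
    exact (Finset.sum_subset (Finset.subset_univ _) (by simp)).symm
  have hmon : monomial m (coeff m q) = coeff m q • (X 0 ^ m 0 * X 1 ^ m 1) := by
    rw [monomial_eq, smul_eq_C_mul, Finsupp.prod_fintype _ _ (by simp), Fin.prod_univ_two]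
  rw [hmon]
  refine Submodule.smul_mem _ _ ?_
  rcases Nat.even_or_odd' (m 0) with ⟨i, hi | hi⟩
  · refine mon i 0 (d - i) (by omega) _ ?_
    rw [← pow_mul, ← pow_mul, hi, show m 1 = 2 * (d - i) by omega]
    ring
  · refine mon i 1 (d - i - 1) (by omega) _ ?_
    rw [← pow_mul, ← pow_mul, hi, show m 1 = 2 * (d - i - 1) + 1 by omega]
    ring

theorem map_bothCones {d : ℕ} (hd : 1 ≤ d) :
    (homogeneousSubmodule (Fin 6) ℂ d).map bothCones =
      (homogeneousSubmodule (Fin 2) ℂ (2 * d)).prod (homogeneousSubmodule (Fin 2) ℂ (2 * d)) := by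
  apply le_antisymm
  · rintro _ ⟨p, hp, rfl⟩
    exact ⟨pullback_isHomogeneous 1 hp, pullback_isHomogeneous (-1) hp⟩
  · rintro ⟨q₁, q₂⟩ ⟨h₁, h₂⟩
    obtain ⟨p₁, ⟨hp₁, hk₁⟩, e₁⟩ := homogeneous_le_map_pullback (ε := 1) (by norm_num) hd h₁
    obtain ⟨p₂, ⟨hp₂, hk₂⟩, e₂⟩ := homogeneous_le_map_pullback (ε := -1) (by norm_num) hd h₂
    refine ⟨p₁ + p₂, Submodule.add_mem _ hp₁ hp₂, ?_⟩
    simp only [SetLike.mem_coe, LinearMap.mem_ker, AlgHom.toLinearMap_apply, neg_neg]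
      at hk₁ hk₂ e₁ e₂
    simp [bothCones, hk₁, hk₂, e₁, e₂]

/-! ### The Hilbert series -/

theorem finrank_homogeneous_zero :
    Module.finrank ℂ
      ((homogeneousSubmodule (Fin 6) ℂ 0).map restrictToHiggs) = 1 := by
  rw [homogeneousSubmodule_zero, Submodule.one_eq_span, Submodule.map_span, Set.image_singleton]
  refine finrank_span_singleton fun h => ?_
  -- The branch is nonempty, so the constant function `1` on it is nonzero.
  have := congrFun h ⟨0, by simp [higgsBranchSU2]⟩
  simp [restrictToHiggs] at this

/-- The unrefined Hilbert series of the Higgs branch of SU(2) with 2 flavours: the space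
of functions on the branch obtained by restricting homogeneous degree-d polynomials in the
six matrix entries has dimension 1 for d = 0 and 4d + 2 for d ≥ 1; equivalently the space
of homogeneous degree-d polynomials vanishing on the branch has dimension
C(d+5,5) − (4d+2) for d ≥ 1. -/
theorem su2_higgs_hilbert_series :
    Module.finrank ℂ
        ((MvPolynomial.homogeneousSubmodule (Fin 6) ℂ 0).map restrictToHiggs) = 1 ∧
    ∀ d : ℕ, 1 ≤ d →
      Module.finrank ℂ
          ((MvPolynomial.homogeneousSubmodule (Fin 6) ℂ d).map restrictToHiggs) =
        4 * d + 2 ∧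
      Module.finrank ℂ
          ↥(MvPolynomial.homogeneousSubmodule (Fin 6) ℂ d ⊓
            LinearMap.ker restrictToHiggs) =
        Nat.choose (d + 5) 5 - (4 * d + 2) := by
  refine ⟨finrank_homogeneous_zero, fun d hd => ?_⟩
  have hR := finrank_map_add_finrank_inf_ker restrictToHiggs (homogeneousSubmodule (Fin 6) ℂ d)
  have hB := finrank_map_add_finrank_inf_ker bothCones (homogeneousSubmodule (Fin 6) ℂ d)
  rw [map_bothCones hd, finrank_submodule_prod, finrank_homogeneousSubmodule 2,
    ← ker_restrictToHiggs] at hB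
  have h6 : Module.finrank ℂ (homogeneousSubmodule (Fin 6) ℂ d) = (d + 5).choose 5 := by
    rw [finrank_homogeneousSubmodule, show 6 + d - 1 = d + 5 by omega, Nat.choose_symm_add]
  have h2 : (2 + 2 * d - 1).choose (2 * d) = 2 * d + 1 := by
    rw [show 2 + 2 * d - 1 = 2 * d + 1 by omega, Nat.choose_succ_self_right]
  omega
end

section
/- Let n ≥ 1 and let S = {M ∈ ℂ^{4n×4n} : Mᵀ = −M, M * M = 0, rank M = 2n}. Consider the action of invertible complex matrices A on M by M ↦ A * M * A⁻¹. Then (1) S is a single orbit under the complex orthogonal group O(4n, ℂ) = {A : Aᵀ * A = 1}, and (2) S is the disjoint union of exactly two orbits under the complex special orthogonal group SO(4n, ℂ) = {A : Aᵀ * A = 1, det A = 1}: there exist M₁, M₂ ∈ S lying in distinct SO(4n, ℂ)-orbits such that every M ∈ S is SO(4n, ℂ)-conjugate to M₁ or to M₂. -/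
/-!
The kernel of `M` in `S` equals its image, a Lagrangian subspace `L` for the form `xᵀ y`. The
argument puts `M` into the normal form `M = U Ω Uᵀ`, where `Ω` is a fixed invertible skew matrix of
size `2n` and the columns of `U` (a basis of `L`) are completed by those of `W` (a basis of a
complementary Lagrangian) to a hyperbolic frame: `Uᵀ U = 0`, `Wᵀ U = 1`, `Wᵀ W = 0`.

* `exists_skew_normal_form`: the existence of symplectic bases, in the form that every skew matrix
  of rank at least `2k` has a compression `Wᵀ M W` equal to a fixed invertible `Ω`.
* `exists_frame`: given `W₀ᵀ M W₀ = Ω`, put `U = M W₀ Ω⁻¹` and correct `W₀` by a multiple of `U`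
  so that its columns become isotropic.
* `exists_orthogonal`: two frames differ by the orthogonal matrix `U' Wᵀ + W' Uᵀ`, which therefore
  conjugates the two normal forms. Hence `S` is one `O`-orbit.
* `det_stabilizer`: an orthogonal matrix commuting with `U Ω Uᵀ` preserves `L`, so it is block upper
  triangular in the frame, with diagonal blocks `g` and `d` satisfying `gᵀ d = 1`; its determinant
  is `1`. Hence a reflection moves `M` to a different `SO`-orbit, and since `det A = ± 1` on the
  orthogonal group there are exactly two.
-/

open Matrix

/-- The orbit of a matrix M₀ under conjugation M ↦ A M A⁻¹ by the complex orthogonal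
group O(N, ℂ) = {A : Aᵀ A = 1}. -/
def oOrbit {N : ℕ} (M₀ : Matrix (Fin N) (Fin N) ℂ) : Set (Matrix (Fin N) (Fin N) ℂ) :=
  {M | ∃ A : Matrix (Fin N) (Fin N) ℂ, Aᵀ * A = 1 ∧ M = A * M₀ * A⁻¹}

/-- The orbit of a matrix M₀ under conjugation M ↦ A M A⁻¹ by the complex special
orthogonal group SO(N, ℂ) = {A : Aᵀ A = 1, det A = 1}. -/
def soOrbit {N : ℕ} (M₀ : Matrix (Fin N) (Fin N) ℂ) : Set (Matrix (Fin N) (Fin N) ℂ) :=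
  {M | ∃ A : Matrix (Fin N) (Fin N) ℂ, Aᵀ * A = 1 ∧ A.det = 1 ∧ M = A * M₀ * A⁻¹}

/-! ### Normal form of skew matrices -/

/-- A compression of a skew matrix to an invertible `Ω` can be enlarged by a hyperbolic plane as
long as the rank has not been exhausted. The matrix `Q` projects onto the orthogonal complement
of the columns of `W` for the alternating form `M`. -/
lemma skew_step {N m : Type*} [Fintype N] [DecidableEq N] [Fintype m] [DecidableEq m]
    (M : Matrix N N ℂ) (hM : Mᵀ = -M) (W : Matrix N m ℂ) (Ω : Matrix m m ℂ)
    (hΩ : IsUnit Ω.det) (hW : Wᵀ * M * W = Ω) (hr : Fintype.card m < M.rank) :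
    ∃ F : Matrix N (Fin 2) ℂ, Wᵀ * M * F = 0 ∧ Fᵀ * M * W = 0 ∧
      Fᵀ * M * F = !![0, 1; -1, 0] := by
  set Q : Matrix N N ℂ := 1 - W * Ω⁻¹ * (Wᵀ * M) with hQ
  have h1 : Wᵀ * M * Q = 0 := by
    rw [hQ, Matrix.mul_sub, Matrix.mul_one, ← Matrix.mul_assoc, ← Matrix.mul_assoc (Wᵀ * M), hW,
      Matrix.mul_nonsing_inv _ hΩ, Matrix.one_mul, sub_self]
  have h2 : Qᵀ * M * W = 0 := by
    have := congrArg Matrix.transpose h1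
    simpa [Matrix.transpose_mul, hM, Matrix.mul_assoc] using this
  have h3 : Qᵀ * M * Q = M * Q := by
    have hXQ : ∀ X : Matrix N N ℂ, X * Q = X - X * W * (Ω⁻¹ * (Wᵀ * M)) := fun X => by
      simp only [hQ, Matrix.mul_sub, Matrix.mul_one, Matrix.mul_assoc]
    have h4 : Qᵀ * M * Q = Qᵀ * M := by rw [hXQ, h2]; simp
    have h5 := congrArg Matrix.transpose h4
    simp only [Matrix.transpose_mul, hM, Matrix.transpose_transpose, Matrix.neg_mul,
      Matrix.mul_neg, neg_inj] at h5
    rw [Matrix.mul_assoc, h5]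
  have hne : Qᵀ * M * Q ≠ 0 := by
    intro h0
    rw [h3, hQ, Matrix.mul_sub, Matrix.mul_one, sub_eq_zero] at h0
    have : M.rank ≤ Fintype.card m := by
      rw [h0, ← Matrix.mul_assoc]
      exact (Matrix.rank_mul_le_left _ _).trans (Matrix.rank_le_card_width _)
    omega
  set T := Qᵀ * M * Q with hT
  have hTs : Tᵀ = -T := by
    simp [hT, Matrix.transpose_mul, hM, Matrix.mul_assoc]
  have hTs' : ∀ a b, T b a = -T a b := fun a b => by
    have := congrFun (congrFun hTs a) b
    simpa using this
  have hTd : ∀ a, T a a = 0 := fun a => by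
    have := hTs' a a
    exact self_eq_neg.mp this
  obtain ⟨i, j, hij⟩ : ∃ i j, T i j ≠ 0 := by
    by_contra! hcon
    exact hne (by ext a b; exact hcon a b)
  let D : Matrix N (Fin 2) ℂ :=
    (1 : Matrix N N ℂ).submatrix id ![i, j] * Matrix.diagonal ![1, (T i j)⁻¹]
  refine ⟨Q * D, ?_, ?_, ?_⟩
  · rw [← Matrix.mul_assoc, h1, Matrix.zero_mul]
  · rw [Matrix.transpose_mul, Matrix.mul_assoc, Matrix.mul_assoc, ← Matrix.mul_assoc Qᵀ, h2,
      Matrix.mul_zero]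
  · have e1 : (Q * D)ᵀ * M * (Q * D) = Dᵀ * T * D := by
      simp only [hT, Matrix.transpose_mul, Matrix.mul_assoc]
    have e2 : Dᵀ * T * D = Matrix.diagonal ![1, (T i j)⁻¹] * T.submatrix ![i, j] ![i, j] *
        Matrix.diagonal ![1, (T i j)⁻¹] := by
      have e3 : ((1 : Matrix N N ℂ).submatrix id ![i, j])ᵀ * T *
          (1 : Matrix N N ℂ).submatrix id ![i, j] = T.submatrix ![i, j] ![i, j] := by
        ext a b
        simp only [Matrix.mul_apply, Matrix.transpose_apply, Matrix.submatrix_apply, id,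
          Matrix.one_apply]
        simp
      rw [← e3]
      simp only [D, Matrix.transpose_mul, Matrix.diagonal_transpose, Matrix.mul_assoc]
    rw [e1, e2]
    ext a b
    fin_cases a <;> fin_cases b <;>
      simp only [Matrix.mul_diagonal, Matrix.diagonal_mul, Matrix.submatrix_apply] <;>
      simp [hTd, hTs' i j, hij]

/-- Existence of symplectic bases. The matrix `Ω` depends only on `k`, so it serves as a common
normal form for all skew matrices of rank `2 * k`. -/
lemma exists_skew_normal_form (k : ℕ) :
    ∃ Ω : Matrix (Fin (2 * k)) (Fin (2 * k)) ℂ, Ωᵀ = -Ω ∧ IsUnit Ω.det ∧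
      ∀ (N : ℕ) (M : Matrix (Fin N) (Fin N) ℂ), Mᵀ = -M → 2 * k ≤ M.rank →
        ∃ W : Matrix (Fin N) (Fin (2 * k)) ℂ, Wᵀ * M * W = Ω := by
  induction k with
  | zero =>
    refine ⟨0, ?_, ?_, fun N M _ _ => ⟨0, ?_⟩⟩
    · ext a; exact absurd a.2 (by simp)
    · have : IsEmpty (Fin (2 * 0)) := by simpa using Fin.isEmpty
      simp
    · simp
  | succ k ih =>
    obtain ⟨Ω, hs, hu, h⟩ := ih
    let e : Fin (2 * k) ⊕ Fin 2 ≃ Fin (2 * (k + 1)) := finSumFinEquiv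
    refine ⟨(Matrix.fromBlocks Ω 0 0 !![0, 1; -1, 0]).submatrix e.symm e.symm, ?_, ?_, ?_⟩
    · have h2 : (!![0, 1; -1, 0] : Matrix (Fin 2) (Fin 2) ℂ)ᵀ = -!![0, 1; -1, 0] := by
        ext a b
        fin_cases a <;> fin_cases b <;> simp
      rw [Matrix.transpose_submatrix, Matrix.fromBlocks_transpose, hs, h2]
      have h3 : Matrix.fromBlocks (-Ω) 0ᵀ 0ᵀ (-!![0, 1; -1, 0]) =
          -Matrix.fromBlocks Ω 0 0 (!![0, 1; -1, 0] : Matrix (Fin 2) (Fin 2) ℂ) := by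
        rw [Matrix.fromBlocks_neg, Matrix.transpose_zero, Matrix.transpose_zero, neg_zero, neg_zero]
      rw [h3]
      rfl
    · rw [Matrix.det_submatrix_equiv_self, Matrix.det_fromBlocks_zero₂₁]
      simpa [Matrix.det_fin_two] using hu
    · intro N M hM hr
      obtain ⟨W, hW⟩ := h N M hM (by omega)
      obtain ⟨F, h1, h2, h3⟩ := skew_step M hM W Ω hu hW (by simp; omega)
      refine ⟨(Matrix.fromCols W F).submatrix id e.symm, ?_⟩
      have : (Matrix.fromCols W F)ᵀ * M * Matrix.fromCols W F
          = Matrix.fromBlocks Ω 0 0 !![0, 1; -1, 0] := by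
        rw [Matrix.transpose_fromCols, Matrix.fromRows_mul, Matrix.fromRows_mul_fromCols,
          hW, h1, h2, h3]
      rw [← this]
      rfl

/-! ### Hyperbolic frames -/

/-- The columns of `U` and `W` span two isotropic subspaces in duality for the form `xᵀ y`. -/
structure IsFrame {N m : Type*} [Fintype N] [Fintype m] [DecidableEq m]
    (U W : Matrix N m ℂ) : Prop where
  uu : Uᵀ * U = 0
  wu : Wᵀ * U = 1
  ww : Wᵀ * W = 0

section Frames

variable {N m : Type*} [Fintype N] [DecidableEq N] [Fintype m] [DecidableEq m]

lemma IsFrame.uw {U W : Matrix N m ℂ} (h : IsFrame U W) : Uᵀ * W = 1 := by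
  have := congrArg Matrix.transpose h.wu
  simpa [Matrix.transpose_mul] using this

lemma IsFrame.left_inv {U W : Matrix N m ℂ} (h : IsFrame U W) :
    Matrix.fromRows Wᵀ Uᵀ * Matrix.fromCols U W = 1 := by
  rw [Matrix.fromRows_mul_fromCols, h.uu, h.wu, h.ww, h.uw, Matrix.fromBlocks_one]

lemma IsFrame.right_inv {U W : Matrix N m ℂ} (h : IsFrame U W)
    (hc : Fintype.card N = Fintype.card m + Fintype.card m) :
    Matrix.fromCols U W * Matrix.fromRows Wᵀ Uᵀ = 1 :=
  (Matrix.mul_eq_one_comm_of_card_eq _ _ _ (by simp [hc])).mp h.left_inv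

lemma IsFrame.complete {U W : Matrix N m ℂ} (h : IsFrame U W)
    (hc : Fintype.card N = Fintype.card m + Fintype.card m) :
    U * Wᵀ + W * Uᵀ = 1 := by
  rw [← h.right_inv hc, Matrix.fromCols_mul_fromRows]

lemma exists_orthogonal {U W U' W' : Matrix N m ℂ} (h : IsFrame U W) (h' : IsFrame U' W')
    (hc : Fintype.card N = Fintype.card m + Fintype.card m) (Ω : Matrix m m ℂ) :
    ∃ A : Matrix N N ℂ, Aᵀ * A = 1 ∧ A * (U * Ω * Uᵀ) * Aᵀ = U' * Ω * U'ᵀ := by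
  refine ⟨U' * Wᵀ + W' * Uᵀ, ?_, ?_⟩
  · rw [← h.complete hc]
    have e1 : ∀ X : Matrix m N ℂ, U'ᵀ * (U' * X) = 0 := fun X => by
      rw [← Matrix.mul_assoc, h'.uu, Matrix.zero_mul]
    have e2 : ∀ X : Matrix m N ℂ, W'ᵀ * (U' * X) = X := fun X => by
      rw [← Matrix.mul_assoc, h'.wu, Matrix.one_mul]
    have e3 : ∀ X : Matrix m N ℂ, U'ᵀ * (W' * X) = X := fun X => by
      rw [← Matrix.mul_assoc, h'.uw, Matrix.one_mul]
    have e4 : ∀ X : Matrix m N ℂ, W'ᵀ * (W' * X) = 0 := fun X => by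
      rw [← Matrix.mul_assoc, h'.ww, Matrix.zero_mul]
    simp only [Matrix.transpose_add, Matrix.transpose_mul, Matrix.transpose_transpose,
      Matrix.add_mul, Matrix.mul_add, Matrix.mul_assoc, e1, e2, e3, e4, Matrix.mul_zero]
    simp [add_comm]
  · have e : (U' * Wᵀ + W' * Uᵀ) * U = U' := by
      rw [Matrix.add_mul, Matrix.mul_assoc, Matrix.mul_assoc, h.wu, h.uu]; simp
    have e' : Uᵀ * (U' * Wᵀ + W' * Uᵀ)ᵀ = U'ᵀ := by
      rw [← Matrix.transpose_mul, e]
    rw [← Matrix.mul_assoc, ← Matrix.mul_assoc, e, Matrix.mul_assoc, e']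

lemma det_stabilizer {U W : Matrix N m ℂ} (h : IsFrame U W)
    (hc : Fintype.card N = Fintype.card m + Fintype.card m) (Ω : Matrix m m ℂ)
    (hΩ : IsUnit Ω.det) (A : Matrix N N ℂ) (hA : Aᵀ * A = 1)
    (hcomm : A * (U * Ω * Uᵀ) = (U * Ω * Uᵀ) * A) : A.det = 1 := by
  obtain ⟨g, hg⟩ : ∃ g : Matrix m m ℂ, A * U = U * g := by
    refine ⟨Ω * Uᵀ * A * W * Ω⁻¹, ?_⟩
    have := congrArg (fun X => X * W * Ω⁻¹) hcomm
    have e : A * (U * Ω * Uᵀ) * W * Ω⁻¹ = A * U := by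
      calc A * (U * Ω * Uᵀ) * W * Ω⁻¹ = A * U * (Ω * (Uᵀ * W) * Ω⁻¹) := by
            simp only [Matrix.mul_assoc]
        _ = A * U := by
            rw [h.uw, Matrix.mul_one, Matrix.mul_nonsing_inv _ hΩ, Matrix.mul_one]
    rw [← e, this]
    simp only [Matrix.mul_assoc]
  have hdet := Matrix.det_conj_of_mul_eq_one h.left_inv (h.right_inv hc) (N := A)
  have hblocks : Matrix.fromRows Wᵀ Uᵀ * A * Matrix.fromCols U W =
      Matrix.fromBlocks g (Wᵀ * A * W) 0 (Uᵀ * A * W) := by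
    rw [Matrix.fromRows_mul, Matrix.fromRows_mul_fromCols, Matrix.mul_assoc Wᵀ A U,
      Matrix.mul_assoc Uᵀ A U, hg, ← Matrix.mul_assoc, ← Matrix.mul_assoc, h.wu, h.uu,
      Matrix.one_mul, Matrix.zero_mul]
  -- `gᵀ (Uᵀ A W) = (A U)ᵀ (A W) = Uᵀ W`
  have hgd : gᵀ * (Uᵀ * A * W) = 1 := by
    calc gᵀ * (Uᵀ * A * W) = (U * g)ᵀ * A * W := by
          rw [Matrix.transpose_mul]; simp only [Matrix.mul_assoc]
      _ = Uᵀ * (Aᵀ * A) * W := by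
          rw [← hg, Matrix.transpose_mul]; simp only [Matrix.mul_assoc]
      _ = 1 := by rw [hA, Matrix.mul_one, h.uw]
  have hd := congrArg Matrix.det hgd
  rw [Matrix.det_mul, Matrix.det_transpose, Matrix.det_one] at hd
  rw [← hdet, hblocks, Matrix.det_fromBlocks_zero₂₁, hd]

/-- A square-zero skew matrix with compression `W₀ᵀ M W₀ = Ω` is `U Ω Uᵀ` in a suitable frame. -/
lemma exists_frame (hc : Fintype.card N = Fintype.card m + Fintype.card m)
    (M : Matrix N N ℂ) (hM : Mᵀ = -M) (hMM : M * M = 0) (Ω : Matrix m m ℂ)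
    (hΩ : IsUnit Ω.det) (W₀ : Matrix N m ℂ) (hW : W₀ᵀ * M * W₀ = Ω) :
    ∃ U W : Matrix N m ℂ, IsFrame U W ∧ M = U * Ω * Uᵀ := by
  obtain ⟨U, hU⟩ : ∃ U, U = M * W₀ * Ω⁻¹ := ⟨_, rfl⟩
  have hUΩ : U * Ω = M * W₀ := by
    rw [hU, Matrix.mul_assoc, Matrix.nonsing_inv_mul _ hΩ, Matrix.mul_one]
  have hMU : M * U = 0 := by
    rw [hU, ← Matrix.mul_assoc, ← Matrix.mul_assoc, hMM]; simp
  have hUM : Uᵀ * M = 0 := by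
    have := congrArg Matrix.transpose hMU
    simpa [Matrix.transpose_mul, hM] using this
  have huu : Uᵀ * U = 0 := by
    conv_lhs => rhs; rw [hU]
    rw [← Matrix.mul_assoc, ← Matrix.mul_assoc, hUM]; simp
  have hwu : W₀ᵀ * U = 1 := by
    rw [hU, ← Matrix.mul_assoc, ← Matrix.mul_assoc, hW, Matrix.mul_nonsing_inv _ hΩ]
  have huw : Uᵀ * W₀ = 1 := by
    have := congrArg Matrix.transpose hwu
    simpa [Matrix.transpose_mul] using this
  -- adding `U S` changes `W₀ᵀ W₀` by `S + Sᵀ`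
  let S : Matrix m m ℂ := (-(1 / 2 : ℂ)) • (W₀ᵀ * W₀)
  have hSt : Sᵀ = S := by simp [S, Matrix.transpose_mul]
  have hF : IsFrame U (W₀ + U * S) := by
    refine ⟨huu, ?_, ?_⟩
    · rw [Matrix.transpose_add, Matrix.transpose_mul, Matrix.add_mul, Matrix.mul_assoc, huu, hwu]
      simp
    · rw [Matrix.transpose_add, Matrix.transpose_mul, hSt, Matrix.add_mul, Matrix.mul_add,
        Matrix.mul_add, ← Matrix.mul_assoc, hwu, Matrix.mul_assoc S, huw,
        Matrix.mul_assoc S, ← Matrix.mul_assoc Uᵀ, huu]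
      simp only [S, Matrix.one_mul, Matrix.mul_one, Matrix.zero_mul, Matrix.mul_zero]
      module
  refine ⟨U, _, hF, ?_⟩
  have hMW : M * (W₀ + U * S) = U * Ω := by
    rw [Matrix.mul_add, ← Matrix.mul_assoc, hMU, hUΩ]; simp
  calc M = M * (U * (W₀ + U * S)ᵀ + (W₀ + U * S) * Uᵀ) := by
        rw [hF.complete hc, Matrix.mul_one]
    _ = U * Ω * Uᵀ := by
        rw [Matrix.mul_add, ← Matrix.mul_assoc, ← Matrix.mul_assoc, hMU, hMW]; simp

lemma frame_mem {U W : Matrix N m ℂ} (h : IsFrame U W) (Ω : Matrix m m ℂ)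
    (hs : Ωᵀ = -Ω) (hΩ : IsUnit Ω.det) :
    (U * Ω * Uᵀ)ᵀ = -(U * Ω * Uᵀ) ∧ (U * Ω * Uᵀ) * (U * Ω * Uᵀ) = 0 ∧
      (U * Ω * Uᵀ).rank = Fintype.card m := by
  refine ⟨?_, ?_, le_antisymm ?_ ?_⟩
  · simp [Matrix.transpose_mul, hs, Matrix.mul_assoc]
  · calc (U * Ω * Uᵀ) * (U * Ω * Uᵀ) = U * Ω * (Uᵀ * U) * (Ω * Uᵀ) := by
          simp only [Matrix.mul_assoc]
      _ = 0 := by rw [h.uu]; simp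
  · exact (Matrix.rank_mul_le_right _ _).trans (Matrix.rank_le_card_height _)
  · have e : Wᵀ * (U * Ω * Uᵀ) * W = Ω := by
      calc Wᵀ * (U * Ω * Uᵀ) * W = (Wᵀ * U) * Ω * (Uᵀ * W) := by
            simp only [Matrix.mul_assoc]
        _ = Ω := by rw [h.wu, h.uw]; simp
    calc Fintype.card m = Ω.rank :=
          (Matrix.rank_of_isUnit Ω ((Matrix.isUnit_iff_isUnit_det Ω).mpr hΩ)).symm
      _ = (Wᵀ * (U * Ω * Uᵀ) * W).rank := by rw [e]
      _ ≤ _ := (Matrix.rank_mul_le_left _ _).trans (Matrix.rank_mul_le_right _ _)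

/-- The isotropic vectors `e_a + i f_a` and `(e_a - i f_a) / 2` form a frame. -/
lemma exists_standard_frame (e : N ≃ m ⊕ m) : ∃ U W : Matrix N m ℂ, IsFrame U W := by
  let U₀ : Matrix (m ⊕ m) m ℂ := Matrix.fromRows 1 (Complex.I • 1)
  let W₀ : Matrix (m ⊕ m) m ℂ := Matrix.fromRows ((1 / 2 : ℂ) • 1) ((-(1 / 2) * Complex.I) • 1)
  have key : ∀ X Y : Matrix (m ⊕ m) m ℂ,
      (X.submatrix e id)ᵀ * Y.submatrix e id = Xᵀ * Y := fun X Y => by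
    rw [Matrix.transpose_submatrix, Matrix.submatrix_mul_equiv, Matrix.submatrix_id_id]
  refine ⟨U₀.submatrix e id, W₀.submatrix e id, ?_, ?_, ?_⟩ <;> rw [key] <;>
    simp only [U₀, W₀, Matrix.transpose_fromRows, Matrix.fromCols_mul_fromRows,
      Matrix.transpose_smul, Matrix.transpose_one, Matrix.mul_smul,
      smul_smul, ← add_smul, Complex.I_mul_I, Matrix.mul_one]
  · rw [show (1 : Matrix m m ℂ) + (-1 : ℂ) • 1 = 0 by simp]
  · rw [show (1 / 2 + Complex.I * (-(1 / 2) * Complex.I) : ℂ) = 1 by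
      linear_combination (-1 / 2) * Complex.I_mul_I, one_smul]
  · rw [show (1 / 2 * (1 / 2) + -(1 / 2) * Complex.I * (-(1 / 2) * Complex.I) : ℂ) = 0 by
      linear_combination (1 / 4) * Complex.I_mul_I, zero_smul]

end Frames

/-! ### The orbits -/

lemma conj_mem {N r : ℕ} {M A : Matrix (Fin N) (Fin N) ℂ} (hA : Aᵀ * A = 1)
    (h : Mᵀ = -M ∧ M * M = 0 ∧ M.rank = r) :
    (A * M * Aᵀ)ᵀ = -(A * M * Aᵀ) ∧ (A * M * Aᵀ) * (A * M * Aᵀ) = 0 ∧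
      (A * M * Aᵀ).rank = r := by
  obtain ⟨h1, h2, h3⟩ := h
  have hu : IsUnit A.det := Matrix.isUnit_det_of_left_inverse hA
  refine ⟨?_, ?_, ?_⟩
  · simp [Matrix.transpose_mul, h1, Matrix.mul_assoc]
  · calc (A * M * Aᵀ) * (A * M * Aᵀ) = A * M * (Aᵀ * A) * (M * Aᵀ) := by
          simp only [Matrix.mul_assoc]
      _ = A * (M * M) * Aᵀ := by rw [hA, Matrix.mul_one]; simp only [Matrix.mul_assoc]
      _ = 0 := by rw [h2]; simp
  · rw [Matrix.rank_mul_eq_left_of_isUnit_det Aᵀ (A * M) (by rwa [Matrix.det_transpose]),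
      Matrix.rank_mul_eq_right_of_isUnit_det A M hu, h3]

lemma exists_reflection {N : ℕ} (hN : 0 < N) :
    ∃ R : Matrix (Fin N) (Fin N) ℂ, Rᵀ = R ∧ R * R = 1 ∧ R.det = -1 := by
  let i₀ : Fin N := ⟨0, hN⟩
  refine ⟨Matrix.diagonal (Function.update 1 i₀ (-1)), Matrix.diagonal_transpose _, ?_, ?_⟩
  · rw [Matrix.diagonal_mul_diagonal, ← Matrix.diagonal_one]
    congr 1
    ext a
    by_cases ha : a = i₀
    · subst ha; simp
    · simp [Function.update_of_ne ha]
  · rw [Matrix.det_diagonal, Finset.prod_update_of_mem (Finset.mem_univ _)]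
    simp

/-- The square-zero antisymmetric 4n×4n complex matrices of maximal rank 2n form a single
O(4n, ℂ)-orbit, which splits into exactly two disjoint SO(4n, ℂ)-orbits (the very even
nilpotent orbits of the partition (2^{2n}) of SO(4n)). -/
theorem very_even_orbit_splitting (n : ℕ) (hn : 1 ≤ n) :
    (∃ M₀ ∈ {M : Matrix (Fin (4 * n)) (Fin (4 * n)) ℂ |
        Mᵀ = -M ∧ M * M = 0 ∧ M.rank = 2 * n},
      {M : Matrix (Fin (4 * n)) (Fin (4 * n)) ℂ |
        Mᵀ = -M ∧ M * M = 0 ∧ M.rank = 2 * n} = oOrbit M₀) ∧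
    (∃ M₁ ∈ {M : Matrix (Fin (4 * n)) (Fin (4 * n)) ℂ |
        Mᵀ = -M ∧ M * M = 0 ∧ M.rank = 2 * n},
      ∃ M₂ ∈ {M : Matrix (Fin (4 * n)) (Fin (4 * n)) ℂ |
        Mᵀ = -M ∧ M * M = 0 ∧ M.rank = 2 * n},
      soOrbit M₁ ∩ soOrbit M₂ = ∅ ∧
      {M : Matrix (Fin (4 * n)) (Fin (4 * n)) ℂ |
        Mᵀ = -M ∧ M * M = 0 ∧ M.rank = 2 * n} = soOrbit M₁ ∪ soOrbit M₂) := by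
  obtain ⟨Ω, hs, hΩ, hnf⟩ := exists_skew_normal_form n
  have hc : Fintype.card (Fin (4 * n)) =
      Fintype.card (Fin (2 * n)) + Fintype.card (Fin (2 * n)) := by
    simp only [Fintype.card_fin]; omega
  obtain ⟨U, W, hF⟩ := exists_standard_frame (N := Fin (4 * n)) (m := Fin (2 * n))
    (Fintype.equivOfCardEq (by rw [hc, Fintype.card_sum]))
  have hM₀ := frame_mem hF Ω hs hΩ
  have hstab := det_stabilizer hF hc Ω hΩ
  have htrans : ∀ M : Matrix (Fin (4 * n)) (Fin (4 * n)) ℂ,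
      Mᵀ = -M ∧ M * M = 0 ∧ M.rank = 2 * n →
      ∃ A : Matrix (Fin (4 * n)) (Fin (4 * n)) ℂ, Aᵀ * A = 1 ∧ M = A * (U * Ω * Uᵀ) * Aᵀ := by
    rintro M ⟨h1, h2, h3⟩
    obtain ⟨W₀, hW₀⟩ := hnf _ M h1 h3.ge
    obtain ⟨U', W', hF', hM⟩ := exists_frame hc M h1 h2 Ω hΩ W₀ hW₀
    obtain ⟨A, hA, hA'⟩ := exists_orthogonal hF hF' hc Ω
    exact ⟨A, hA, by rw [hA', hM]⟩
  rw [Fintype.card_fin] at hM₀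
  generalize U * Ω * Uᵀ = M₀ at hM₀ hstab htrans
  have hinv : ∀ {A : Matrix (Fin (4 * n)) (Fin (4 * n)) ℂ}, Aᵀ * A = 1 → A⁻¹ = Aᵀ :=
    fun h => Matrix.inv_eq_left_inv h
  obtain ⟨R, hRt, hRR, hRd⟩ := exists_reflection (N := 4 * n) (by omega)
  have hRo : Rᵀ * R = 1 := by rw [hRt, hRR]
  have hM₂ := conj_mem hRo hM₀
  refine ⟨⟨M₀, hM₀, ?_⟩, M₀, hM₀, R * M₀ * Rᵀ, hM₂, ?_, ?_⟩
  · ext M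
    constructor
    · intro hM
      obtain ⟨A, hA, rfl⟩ := htrans M hM
      exact ⟨A, hA, by rw [hinv hA]⟩
    · rintro ⟨A, hA, rfl⟩
      rw [hinv hA]
      exact conj_mem hA hM₀
  · rw [Set.eq_empty_iff_forall_notMem]
    rintro M ⟨⟨A, hA, hAd, hMA⟩, B, hB, hBd, hMB⟩
    rw [hinv hA] at hMA
    rw [hinv hB] at hMB
    have hA' : A * Aᵀ = 1 := mul_eq_one_comm.mp hA
    have hB' : B * Bᵀ = 1 := mul_eq_one_comm.mp hB
    -- `Aᵀ B R` stabilizes `M₀` but has determinant `-1`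
    have hd := hstab (Aᵀ * B * R) ?_ ?_
    · rw [Matrix.det_mul, Matrix.det_mul, Matrix.det_transpose, hAd, hBd, hRd] at hd
      norm_num at hd
    · calc (Aᵀ * B * R)ᵀ * (Aᵀ * B * R) = Rᵀ * (Bᵀ * (A * Aᵀ) * B) * R := by
            simp only [Matrix.transpose_mul, Matrix.transpose_transpose, Matrix.mul_assoc]
        _ = 1 := by rw [hA', Matrix.mul_one, hB, Matrix.mul_one, hRo]
    · calc Aᵀ * B * R * M₀ = Aᵀ * (B * (R * M₀ * Rᵀ) * Bᵀ) * (B * R) := by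
            have : Aᵀ * (B * (R * M₀ * Rᵀ) * Bᵀ) * (B * R)
                = Aᵀ * B * R * M₀ * (Rᵀ * (Bᵀ * B) * R) := by
              simp only [Matrix.mul_assoc]
            rw [this, hB, Matrix.mul_one, hRo, Matrix.mul_one]
        _ = Aᵀ * (A * M₀ * Aᵀ) * (B * R) := by rw [← hMB, hMA]
        _ = (Aᵀ * A) * M₀ * (Aᵀ * B * R) := by simp only [Matrix.mul_assoc]
        _ = M₀ * (Aᵀ * B * R) := by rw [hA, Matrix.one_mul]
  · ext M
    constructor
    · intro hM
      obtain ⟨A, hA, rfl⟩ := htrans M hM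
      have hd : A.det * A.det = 1 := by
        have := congrArg Matrix.det hA
        rwa [Matrix.det_mul, Matrix.det_transpose, Matrix.det_one] at this
      rcases mul_self_eq_one_iff.mp hd with h1 | h1
      · exact Or.inl ⟨A, hA, h1, by rw [hinv hA]⟩
      · have hAR : (A * R)ᵀ * (A * R) = 1 := by
          calc (A * R)ᵀ * (A * R) = Rᵀ * (Aᵀ * A) * R := by
                simp only [Matrix.transpose_mul, Matrix.mul_assoc]
            _ = 1 := by rw [hA, Matrix.mul_one, hRo]
        refine Or.inr ⟨A * R, hAR, by rw [Matrix.det_mul, h1, hRd]; norm_num, ?_⟩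
        rw [hinv hAR, Matrix.transpose_mul, hRt]
        calc A * M₀ * Aᵀ = A * (R * R) * M₀ * (R * R) * Aᵀ := by
              rw [hRR, Matrix.mul_one, Matrix.mul_one]
          _ = _ := by simp only [Matrix.mul_assoc]
    · rintro (⟨A, hA, -, rfl⟩ | ⟨A, hA, -, rfl⟩) <;> rw [hinv hA]
      · exact conj_mem hA hM₀
      · exact conj_mem hA hM₂
end

section
/- Let n ≥ 1 and let k be an integer with 0 ≤ k < n. Then the set {M ∈ ℂ^{4n×4n} : Mᵀ = −M, M * M = 0, rank M = 2k} is a single orbit under the action M ↦ A * M * A⁻¹ of the complex special orthogonal group SO(4n, ℂ) = {A : Aᵀ * A = 1, det A = 1}. -/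
/-!
Two antisymmetric complex matrices that are similar are already similar by an orthogonal matrix.
Indeed, if `M' = P M P⁻¹`, transposing shows that the symmetric invertible matrix `S = Pᵀ P`
commutes with `M`.  Over `ℂ`, `S` has a square root `Q` which is a polynomial in `S`
(`exists_sqrt_poly`), hence symmetric and commuting with `M`; then `A = P Q⁻¹` is orthogonal and
still conjugates `M` to `M'` (`exists_orthogonal_conj`).

Square-zero matrices of equal rank are similar (`exists_conj_of_sq_zero`): if `C` is a complement of
`ker M` and `D` a complement of `range M` in `ker M`, then `(c, c', d) ↦ c + M c' + d` identifies
`C × C × D` with the whole space (`exists_sq_zero_model`), and `M` becomes `(c, c', d) ↦ (0, c, 0)`.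

Together these show that the set is a single orbit of the full orthogonal group.  The base point
`M₀` produced by `exists_base_point` has a vanishing row and column, because `4k < 4n`; the
reflection in that coordinate has determinant `-1` and commutes with `M₀`, so the conjugating matrix
can be corrected to have determinant `1`.
-/

open Matrix

/-- `X` has a square root modulo a monic complex polynomial not vanishing at `0`: interpolate square
roots of the zeros of `f`, and lift from the reduced quotient by Newton's method. -/
lemma exists_sqrt_poly (f : Polynomial ℂ) (hf : f.Monic) (h0 : f.eval 0 ≠ 0) :
    ∃ q : Polynomial ℂ, f ∣ q ^ 2 - Polynomial.X := by
  classical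
  choose s hs using fun z : ℂ => IsAlgClosed.exists_pow_nat_eq z two_pos
  let p : Polynomial ℂ := Lagrange.interpolate f.roots.toFinset id s
  have hp : ∀ z ∈ f.roots, (Polynomial.X - Polynomial.C z) ∣ p ^ 2 - Polynomial.X := by
    intro z hz
    rw [Polynomial.dvd_iff_isRoot, Polynomial.IsRoot, Polynomial.eval_sub, Polynomial.eval_pow,
      Polynomial.eval_X, sub_eq_zero]
    have := Lagrange.eval_interpolate_at_node (s := f.roots.toFinset) (v := id) s
      (Set.injOn_id _) (Multiset.mem_toFinset.2 hz)
    rw [id] at this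
    rw [this]
    exact hs z
  have hdvd : f ∣ (p ^ 2 - Polynomial.X) ^ f.roots.card := by
    conv_lhs => rw [(IsAlgClosed.splits f).eq_prod_roots_of_monic hf]
    rw [← Multiset.prod_replicate, ← Multiset.map_const']
    exact Multiset.prod_dvd_prod_of_dvd _ _ hp
  let r := AdjoinRoot.root f
  let x := AdjoinRoot.mk f p
  have hnil : IsNilpotent (x ^ 2 - r) := by
    refine ⟨f.roots.card, ?_⟩
    have := AdjoinRoot.mk_eq_zero.2 hdvd
    simpa [x, r] using this
  have hr : IsUnit r := by
    have hc : IsCoprime (Polynomial.X : Polynomial ℂ) f := by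
      rw [(Polynomial.irreducible_X).coprime_iff_not_dvd, Polynomial.X_dvd_iff,
        Polynomial.coeff_zero_eq_eval_zero]
      exact h0
    obtain ⟨u, v, huv⟩ := hc
    have := congrArg (AdjoinRoot.mk f) huv
    simp only [map_add, map_mul, AdjoinRoot.mk_self, AdjoinRoot.mk_X, mul_zero, add_zero,
      map_one] at this
    exact IsUnit.of_mul_eq_one_right _ this
  have hx : IsUnit x := by
    have h2 : IsUnit (x ^ 2) := by
      have := hnil.isUnit_add_left_of_commute hr (Commute.all _ _)
      simpa using this
    exact (isUnit_pow_iff two_ne_zero).1 h2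
  have h2u : IsUnit (2 : AdjoinRoot f) := by
    have := (IsUnit.mk0 (2 : ℂ) two_ne_zero).map (AdjoinRoot.of f)
    rwa [map_ofNat] at this
  obtain ⟨y, ⟨-, hy⟩, -⟩ := Polynomial.existsUnique_nilpotent_sub_and_aeval_eq_zero
    (P := (Polynomial.X ^ 2 - Polynomial.C r : Polynomial (AdjoinRoot f))) (x := x)
    (by simpa using hnil) (by simpa [one_add_one_eq_two] using And.intro h2u hx)
  obtain ⟨q, rfl⟩ := AdjoinRoot.mk_surjective y
  refine ⟨q, AdjoinRoot.mk_eq_zero.1 ?_⟩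
  simpa [r] using hy

/-- An invertible complex matrix has a square root that is a polynomial in it. -/
lemma exists_matrix_sqrt {N : ℕ} (S : Matrix (Fin N) (Fin N) ℂ) (hS : IsUnit S.det) :
    ∃ q : Polynomial ℂ, Polynomial.aeval S q * Polynomial.aeval S q = S := by
  obtain ⟨q, hq⟩ := exists_sqrt_poly S.charpoly S.charpoly_monic (by
    rw [← Polynomial.coeff_zero_eq_eval_zero]
    intro h
    rw [det_eq_sign_charpoly_coeff, h] at hS
    simp at hS)
  refine ⟨q, ?_⟩
  obtain ⟨g, hg⟩ := hq
  have := congrArg (Polynomial.aeval S) hg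
  rw [map_mul, aeval_self_charpoly, zero_mul, map_sub, map_pow, Polynomial.aeval_X, sub_eq_zero,
    sq] at this
  exact this

/-- Antisymmetric matrices that are similar are orthogonally similar. -/
lemma exists_orthogonal_conj {N : ℕ} (M M' P : Matrix (Fin N) (Fin N) ℂ)
    (hM : Mᵀ = -M) (hM' : M'ᵀ = -M') (hP : IsUnit P.det) (h : M' * P = P * M) :
    ∃ A : Matrix (Fin N) (Fin N) ℂ, Aᵀ * A = 1 ∧ M' * A = A * M := by
  have hT : Pᵀ * M' = M * Pᵀ := by
    have := congrArg transpose h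
    simpa [transpose_mul, hM, hM'] using this
  have hcomm : Commute (Pᵀ * P) M := by
    change Pᵀ * P * M = M * (Pᵀ * P)
    rw [Matrix.mul_assoc, ← h, ← Matrix.mul_assoc, hT, Matrix.mul_assoc]
  have hSdet : IsUnit (Pᵀ * P).det := by
    rw [det_mul, det_transpose]; exact hP.mul hP
  obtain ⟨q, hq⟩ := exists_matrix_sqrt (Pᵀ * P) hSdet
  set Q := Polynomial.aeval (Pᵀ * P) q with hQ
  have hQM : Q * M = M * Q := by
    have h2 : Q ∈ Algebra.adjoin ℂ {Pᵀ * P} := Polynomial.aeval_mem_adjoin_singleton ℂ _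
    exact (Algebra.commute_of_mem_adjoin_singleton_of_commute h2 hcomm.symm).symm
  have hQT : Qᵀ = Q := by
    rw [hQ, Polynomial.aeval_eq_sum_range, transpose_sum]
    simp [transpose_pow, transpose_mul]
  have hQdet : IsUnit Q.det := by
    have : IsUnit (Q * Q).det := hq ▸ hSdet
    rw [det_mul] at this
    exact isUnit_of_mul_isUnit_left this
  refine ⟨P * Q⁻¹, ?_, ?_⟩
  · rw [transpose_mul, transpose_nonsing_inv, hQT]
    calc Q⁻¹ * Pᵀ * (P * Q⁻¹) = Q⁻¹ * (Pᵀ * P) * Q⁻¹ := by simp only [Matrix.mul_assoc]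
      _ = (Q⁻¹ * Q) * (Q * Q⁻¹) := by rw [← hq]; simp only [Matrix.mul_assoc]
      _ = 1 := by rw [nonsing_inv_mul _ hQdet, mul_nonsing_inv _ hQdet, Matrix.mul_one]
  · have : M * Q⁻¹ = Q⁻¹ * M := by
      calc M * Q⁻¹ = Q⁻¹ * Q * M * Q⁻¹ := by rw [nonsing_inv_mul _ hQdet, Matrix.one_mul]
        _ = Q⁻¹ * (M * Q) * Q⁻¹ := by rw [← hQM]; simp only [Matrix.mul_assoc]
        _ = Q⁻¹ * M := by
          rw [Matrix.mul_assoc, Matrix.mul_assoc, mul_nonsing_inv _ hQdet, Matrix.mul_one]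
    rw [← Matrix.mul_assoc, h, Matrix.mul_assoc, this, Matrix.mul_assoc]

/-- Normal form of a square-zero endomorphism: in suitable coordinates `(c, c', d)` it is
`(c, c', d) ↦ (0, c, 0)`. -/
lemma exists_sq_zero_model {V : Type*} [AddCommGroup V] [Module ℂ V] [FiniteDimensional ℂ V]
    (f : V →ₗ[ℂ] V) (hf : f ∘ₗ f = 0) :
    ∃ (C D : Submodule ℂ V) (e : (C × C × D) ≃ₗ[ℂ] V),
      Module.finrank ℂ C = Module.finrank ℂ (LinearMap.range f) ∧
      ∀ x, f (e x) = e (0, x.1, 0) := by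
  have hff : ∀ x, f (f x) = 0 := fun x => LinearMap.congr_fun hf x
  obtain ⟨C, hC⟩ := Submodule.exists_isCompl (LinearMap.ker f)
  obtain ⟨D', hD'⟩ := Submodule.exists_isCompl
    ((LinearMap.range f).comap (LinearMap.ker f).subtype)
  let D := D'.map (LinearMap.ker f).subtype
  have hDker : ∀ d ∈ D, f d = 0 := by
    rintro _ ⟨d, -, rfl⟩
    exact d.2
  let φ : (C × C × D) →ₗ[ℂ] V :=
    C.subtype.coprod ((f ∘ₗ C.subtype).coprod D.subtype)
  have hφ : ∀ x, φ x = x.1 + (f x.2.1 + x.2.2) := fun x => rfl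
  have hC0 : ∀ c ∈ C, f c = 0 → c = 0 := fun c hc h =>
    (Submodule.disjoint_def.1 hC.disjoint) c h hc
  have hφf : ∀ x, f (φ x) = f x.1 := by
    intro x
    rw [hφ, map_add, map_add, hff, hDker _ x.2.2.2]; simp
  have hinj : Function.Injective φ := by
    rw [← LinearMap.ker_eq_bot, LinearMap.ker_eq_bot']
    rintro ⟨c, c', d⟩ h
    have h1 : (c : V) = 0 := hC0 c c.2 (by
      have := hφf (c, c', d); rw [h] at this; simpa using this.symm)
    have h2 : f c' + d = 0 := by
      have := hφ (c, c', d); rw [h] at this; simpa [h1] using this.symm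
    have h3 : (d : V) = 0 := by
      obtain ⟨d0, hd0, hd1⟩ := d.2
      have : d0 = 0 := by
        refine (Submodule.disjoint_def.1 hD'.disjoint) d0 ?_ hd0
        refine ⟨-c', ?_⟩
        rw [hd1, map_neg]
        exact neg_eq_of_add_eq_zero_right h2
      rw [← hd1, this]; simp
    have h4 : (c' : V) = 0 := hC0 c' c'.2 (by simpa [h3] using h2)
    ext <;> simp [h1, h3, h4]
  have hsurj : Function.Surjective φ := by
    intro v
    obtain ⟨κ, hκ, c, hc, rfl⟩ := Submodule.mem_sup.1
      (hC.sup_eq_top ▸ Submodule.mem_top : v ∈ LinearMap.ker f ⊔ C)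
    obtain ⟨i, ⟨w, hw⟩, d, hd, hid⟩ := Submodule.mem_sup.1
      (hD'.sup_eq_top ▸ Submodule.mem_top : (⟨κ, hκ⟩ : LinearMap.ker f) ∈ _ ⊔ D')
    obtain ⟨κ', hκ', c', hc', rfl⟩ := Submodule.mem_sup.1
      (hC.sup_eq_top ▸ Submodule.mem_top : w ∈ LinearMap.ker f ⊔ C)
    refine ⟨(⟨c, hc⟩, ⟨c', hc'⟩, ⟨d, Submodule.mem_map_of_mem hd⟩), ?_⟩
    have h1 := congrArg Subtype.val hid
    rw [map_add, LinearMap.mem_ker.1 hκ', zero_add] at hw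
    rw [hφ]
    simp only [Submodule.coe_subtype, Submodule.coe_add] at h1 hw ⊢
    rw [hw, h1, add_comm]
  refine ⟨C, D, LinearEquiv.ofBijective φ ⟨hinj, hsurj⟩, ?_, ?_⟩
  · have h1 := Submodule.finrank_add_eq_of_isCompl hC
    have h2 := f.finrank_range_add_finrank_ker
    omega
  · intro x
    change f (φ x) = φ (0, x.1, 0)
    rw [hφf, hφ]; simp

lemma exists_conj_of_sq_zero {N : ℕ} (M M' : Matrix (Fin N) (Fin N) ℂ)
    (hM : M * M = 0) (hM' : M' * M' = 0) (hr : M.rank = M'.rank) :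
    ∃ P : Matrix (Fin N) (Fin N) ℂ, IsUnit P.det ∧ M' * P = P * M := by
  obtain ⟨C, D, e, hC, he⟩ := exists_sq_zero_model (toLin' M) (by
    rw [← toLin'_mul, hM, map_zero])
  obtain ⟨C', D', e', hC', he'⟩ := exists_sq_zero_model (toLin' M') (by
    rw [← toLin'_mul, hM', map_zero])
  have hCC : Module.finrank ℂ C = Module.finrank ℂ C' := by
    rw [hC, hC']; exact hr
  have hDD : Module.finrank ℂ D = Module.finrank ℂ D' := by
    have h1 := e.finrank_eq
    have h2 := e'.finrank_eq
    simp only [Module.finrank_prod] at h1 h2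
    omega
  let a := LinearEquiv.ofFinrankEq C C' hCC
  let b := LinearEquiv.ofFinrankEq D D' hDD
  let F : (Fin N → ℂ) ≃ₗ[ℂ] (Fin N → ℂ) :=
    e.symm ≪≫ₗ (a.prodCongr (a.prodCongr b)) ≪≫ₗ e'
  refine ⟨LinearMap.toMatrix' F.toLinearMap, ?_, ?_⟩
  · rw [LinearMap.det_toMatrix']
    exact F.isUnit_det'
  · apply toLin'.injective
    rw [toLin'_mul, toLin'_mul, toLin'_toMatrix']
    refine LinearMap.ext fun x => ?_
    obtain ⟨y, rfl⟩ := e.surjective x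
    simp [F, he, he']

/-- The base point is `U J Uᵀ`, where `J` is the standard symplectic matrix of size `2k` and the
columns of `U` span an isotropic subspace of dimension `2k`. -/
lemma exists_base_point (n k : ℕ) (hk : k < n) :
    ∃ M : Matrix (Fin (4 * n)) (Fin (4 * n)) ℂ,
      Mᵀ = -M ∧ M * M = 0 ∧ M.rank = 2 * k ∧ ∃ i, ∀ j, M i j = 0 := by
  let U : Matrix (((Fin k ⊕ Fin k) ⊕ (Fin k ⊕ Fin k)) ⊕ Fin (4 * n - 4 * k)) (Fin k ⊕ Fin k) ℂ :=
    fromRows (fromRows 1 (Complex.I • 1)) 0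
  let L : Matrix (Fin k ⊕ Fin k) (((Fin k ⊕ Fin k) ⊕ (Fin k ⊕ Fin k)) ⊕ Fin (4 * n - 4 * k)) ℂ :=
    fromCols (fromCols 1 0) 0
  have hLU : L * U = 1 := by
    simp [L, U, fromCols_mul_fromRows]
  have hUU : Uᵀ * U = 0 := by
    simp [U, transpose_fromRows, fromCols_mul_fromRows, smul_smul]
  let J := Matrix.J (Fin k) ℂ
  let M := U * J * Uᵀ
  have hMT : Mᵀ = -M := by
    simp [M, J, transpose_mul, J_transpose, Matrix.mul_assoc]
  have hMM : M * M = 0 := by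
    calc M * M = U * J * (Uᵀ * U) * J * Uᵀ := by simp only [M, Matrix.mul_assoc]
      _ = 0 := by rw [hUU]; simp
  have hJ : J.rank = 2 * k := by
    rw [rank_of_isUnit _ ((isUnit_iff_isUnit_det _).2 (isUnit_det_J (Fin k) ℂ))]
    simp; ring
  have hrank : M.rank = 2 * k := by
    apply le_antisymm
    · rw [← hJ]
      exact (rank_mul_le_left _ _).trans (rank_mul_le_right _ _)
    · have : L * M * Lᵀ = J := by
        calc L * M * Lᵀ = (L * U) * J * (L * U)ᵀ := by
              simp only [M, transpose_mul, Matrix.mul_assoc]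
          _ = J := by rw [hLU]; simp
      rw [← hJ, ← this]
      exact (rank_mul_le_left _ _).trans (rank_mul_le_right _ _)
  have hcard : Fintype.card (((Fin k ⊕ Fin k) ⊕ (Fin k ⊕ Fin k)) ⊕ Fin (4 * n - 4 * k)) =
      Fintype.card (Fin (4 * n)) := by
    simp; omega
  let e : (((Fin k ⊕ Fin k) ⊕ (Fin k ⊕ Fin k)) ⊕ Fin (4 * n - 4 * k)) ≃ Fin (4 * n) :=
    Fintype.equivOfCardEq hcard
  refine ⟨M.submatrix e.symm e.symm, ?_, ?_, ?_, e (Sum.inr ⟨0, by omega⟩), ?_⟩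
  · rw [transpose_submatrix, hMT]; rfl
  · rw [submatrix_mul_equiv, hMM]; rfl
  · rw [rank_submatrix, hrank]
  · intro j
    simp [M, U, Matrix.mul_assoc]

/-- For 0 ≤ k < n, the square-zero antisymmetric 4n×4n complex matrices of submaximal
rank 2k form a single SO(4n, ℂ)-orbit (the nilpotent orbit of the partition
(2^{2k}, 1^{4n−4k}) of SO(4n), which is not very even). -/
theorem submaximal_rank_single_orbit (n k : ℕ) (hn : 1 ≤ n) (hk : k < n) :
    ∃ M₀ ∈ {M : Matrix (Fin (4 * n)) (Fin (4 * n)) ℂ |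
        Mᵀ = -M ∧ M * M = 0 ∧ M.rank = 2 * k},
      {M : Matrix (Fin (4 * n)) (Fin (4 * n)) ℂ |
        Mᵀ = -M ∧ M * M = 0 ∧ M.rank = 2 * k} = soOrbit M₀ := by
  obtain ⟨M₀, hT, hsq, hr, i₀, hi₀⟩ := exists_base_point n k hk
  refine ⟨M₀, ⟨hT, hsq, hr⟩, Set.ext fun M => ⟨?_, ?_⟩⟩
  · rintro ⟨hMT, hMsq, hMr⟩
    obtain ⟨P, hP, hPM⟩ := exists_conj_of_sq_zero M₀ M hsq hMsq (hr.trans hMr.symm)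
    obtain ⟨A, hA, hAM⟩ := exists_orthogonal_conj M₀ M P hT hMT hP hPM
    have hdet : A.det = 1 ∨ A.det = -1 := by
      have := congrArg det hA
      rw [det_mul, det_transpose, det_one] at this
      exact mul_self_eq_one_iff.1 this
    have key : ∀ B : Matrix (Fin (4 * n)) (Fin (4 * n)) ℂ, Bᵀ * B = 1 → B.det = 1 →
        M * B = B * M₀ → M ∈ soOrbit M₀ := by
      intro B hB hBd hBM
      refine ⟨B, hB, hBd, ?_⟩
      rw [← hBM, Matrix.mul_assoc, mul_nonsing_inv _ (by simp [hBd]), Matrix.mul_one]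
    rcases hdet with hd | hd
    · exact key A hA hd hAM
    · -- The reflection in the coordinate `i₀` fixes `M₀` on both sides.
      let R : Matrix (Fin (4 * n)) (Fin (4 * n)) ℂ :=
        diagonal (Function.update 1 i₀ (-1))
      have hcol : ∀ j, M₀ j i₀ = 0 := by
        intro j
        have := congrFun (congrFun hT i₀) j
        simpa [hi₀] using this
      have hRM : R * M₀ = M₀ := by
        ext i j
        rw [diagonal_mul]
        by_cases h : i = i₀
        · subst h; simp [hi₀]
        · simp [h]
      have hMR : M₀ * R = M₀ := by
        ext i j
        rw [mul_diagonal]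
        by_cases h : j = i₀
        · subst h; simp [hcol]
        · simp [h]
      have hRR : Rᵀ * R = 1 := by
        rw [diagonal_transpose, diagonal_mul_diagonal, ← diagonal_one]
        congr 1
        ext i
        by_cases h : i = i₀
        · subst h; simp
        · simp [h]
      have hRd : R.det = -1 := by
        rw [det_diagonal, Finset.prod_update_of_mem (Finset.mem_univ _)]
        simp
      refine key (A * R) ?_ (by rw [det_mul, hd, hRd]; norm_num) ?_
      · rw [transpose_mul, Matrix.mul_assoc, ← Matrix.mul_assoc Aᵀ, hA, Matrix.one_mul, hRR]
      · rw [← Matrix.mul_assoc, hAM, Matrix.mul_assoc, hMR, Matrix.mul_assoc, hRM]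
  · rintro ⟨A, hA, hd, rfl⟩
    have hinv : A⁻¹ = Aᵀ := inv_eq_left_inv hA
    have hu : IsUnit A.det := by simp [hd]
    rw [hinv]
    refine ⟨?_, ?_, ?_⟩
    · simp [transpose_mul, hT, Matrix.mul_assoc]
    · calc A * M₀ * Aᵀ * (A * M₀ * Aᵀ) = A * M₀ * (Aᵀ * A) * M₀ * Aᵀ := by
            simp only [Matrix.mul_assoc]
        _ = A * (M₀ * M₀) * Aᵀ := by rw [hA, Matrix.mul_one, Matrix.mul_assoc A]
        _ = 0 := by rw [hsq]; simp
    · rw [rank_mul_eq_left_of_isUnit_det _ _ (by rwa [det_transpose]),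
        rank_mul_eq_right_of_isUnit_det _ _ hu, hr]
end

section
/- Let n ≥ 1 and suppose O₁ and O₂ are the two SO(4n, ℂ)-orbits (under M ↦ A * M * A⁻¹, A with Aᵀ A = 1 and det A = 1) whose disjoint union is {M ∈ ℂ^{4n×4n} : Mᵀ = −M, M * M = 0, rank M = 2n}. Then, taking closures in the standard topology on ℂ^{4n×4n}: (1) closure(O₁) ∪ closure(O₂) = {M : Mᵀ = −M, M * M = 0}, and (2) closure(O₁) ∩ closure(O₂) = {M : Mᵀ = −M, M * M = 0, rank M ≤ 2n − 2}. -/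
/-!
Write `x ⬝ᵥ y` for the complex bilinear form on `ℂ^{4n}`. If `M` is skew with `M² = 0`, its range is
isotropic, hence lies in a Lagrangian (isotropic of dimension `2n`) subspace `L`. A Hermitian
orthonormal basis of `L`, as the columns of `U`, together with its complex conjugate `V`, satisfies
`Uᵀ U = Vᵀ V = 0`, `Vᵀ U = 1`, and `M = U m Uᵀ` with `m = Vᵀ M V` skew of size `2n` and of the same
rank as `M` (`exists_lagrangianFrame`).

*Union.* Perturbing `m` to `m + t w` with `w` skew and invertible makes it invertible for all but
finitely many `t`, so the rank `2n` matrices are dense among all square-zero skew ones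
(`closure_maxRankCone`).

*A determinant criterion.* In a Lagrangian frame an orthogonal `A` has blocks `a b c d` with
`aᵀ c` skew and `aᵀ d + cᵀ b = 1`, so a Schur complement gives `det A = 1` as soon as
`a = Vᵀ A U` is invertible. Since `Vᵀ (A M Aᵀ) V = a m aᵀ`, this applies whenever the left-hand side
is invertible (`IsLagrangianFrame.det_eq_one`).

*Intersection.* For `M` of rank `2n` the criterion shows that the stabiliser of `M` in the orthogonal
group consists of matrices of determinant one; hence conjugation by any orthogonal matrix of
determinant `-1` exchanges `O₁` and `O₂` (`conj_mem_other`). If `N ∈ O₂` is close to `M ∈ O₁`,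
then `Vᵀ N V` is still invertible while `N = A M Aᵀ` with `det A = -1`, contradicting the criterion;
so no matrix of rank `2n` lies in both closures (`notMem_closure_other`). As skew matrices have even
rank, the intersection consists of matrices of rank at most `2n - 2`. Conversely, if
`rank M ≤ 2n - 2`, the kernel of `M` is too large to be isotropic, so it contains `v` with
`v ⬝ᵥ v ≠ 0`; the reflection in `v` fixes `M` and exchanges `O₁` and `O₂`, hence `M` lies in both
closures as soon as it lies in one (`mem_closure_other`).
-/

open Matrix

/-! ### Lagrangian frames and the determinant criterion -/

/-- The columns of `U` and `V` are bases of two complementary Lagrangian subspaces of `ℂ^{4n}`, dual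
to each other under the bilinear form `x ⬝ᵥ y`. -/
structure IsLagrangianFrame {n : ℕ} (U V : Matrix (Fin (4 * n)) (Fin (2 * n)) ℂ) : Prop where
  isotropic_left : Uᵀ * U = 0
  isotropic_right : Vᵀ * V = 0
  dual : Vᵀ * U = 1

namespace IsLagrangianFrame

variable {n : ℕ} {U V : Matrix (Fin (4 * n)) (Fin (2 * n)) ℂ}

lemma dual' (h : IsLagrangianFrame U V) : Uᵀ * V = 1 := by
  simpa using congrArg transpose h.dual

/-- The columns of `U` and `V` together form a basis, by counting dimensions. -/
lemma complete (h : IsLagrangianFrame U V) : U * Vᵀ + V * Uᵀ = 1 := by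
  have h1 : fromRows Vᵀ Uᵀ * fromCols U V = 1 := by
    rw [fromRows_mul_fromCols, h.dual, h.dual', h.isotropic_left, h.isotropic_right,
      fromBlocks_one]
  have h2 := (mul_eq_one_comm_of_card_eq _ _ _ (by simp; ring)).1 h1
  rwa [fromCols_mul_fromRows] at h2

/-- An orthogonal matrix whose upper left block in a Lagrangian frame is invertible has
determinant one. -/
lemma det_eq_one_of_block (h : IsLagrangianFrame U V)
    {A : Matrix (Fin (4 * n)) (Fin (4 * n)) ℂ} (hA : Aᵀ * A = 1)
    (ha : (Vᵀ * A * U).det ≠ 0) : A.det = 1 := by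
  have hQP : fromRows Vᵀ Uᵀ * fromCols U V = 1 := by
    rw [fromRows_mul_fromCols, h.dual, h.dual', h.isotropic_left, h.isotropic_right,
      fromBlocks_one]
  have hPQ : fromCols U V * fromRows Vᵀ Uᵀ = 1 := by
    rw [fromCols_mul_fromRows, h.complete]
  have hdet : A.det = (fromBlocks (Vᵀ * A * U) (Vᵀ * A * V) (Uᵀ * A * U) (Uᵀ * A * V)).det := by
    rw [← det_conj_of_mul_eq_one (N := A) hQP hPQ, fromRows_mul, fromRows_mul_fromCols]
  -- Orthogonality of `A` read off in the frame; `X = U` and `X = V` give the two block relations.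
  have key : ∀ X : Matrix (Fin (4 * n)) (Fin (2 * n)) ℂ,
      (Vᵀ * A * U)ᵀ * (Uᵀ * A * X) + (Uᵀ * A * U)ᵀ * (Vᵀ * A * X) = Uᵀ * X := by
    intro X
    calc _ = Uᵀ * Aᵀ * (U * Vᵀ + V * Uᵀ) * A * X := by
            simp only [transpose_mul, transpose_transpose, Matrix.mul_add, Matrix.add_mul,
              Matrix.mul_assoc]
            rw [add_comm]
      _ = Uᵀ * (Aᵀ * A) * X := by
            rw [h.complete]; simp only [Matrix.mul_one, Matrix.mul_assoc]
      _ = _ := by rw [hA, Matrix.mul_one]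
  have k1 := key U
  have k2 := key V
  rw [h.isotropic_left] at k1
  rw [h.dual'] at k2
  set a := Vᵀ * A * U
  set b := Vᵀ * A * V
  set c := Uᵀ * A * U
  set d := Uᵀ * A * V
  clear_value a b c d
  have hau : IsUnit a.det := isUnit_iff_ne_zero.2 ha
  let _ := a.invertibleOfIsUnitDet hau
  rw [hdet, det_fromBlocks₁₁, ← det_transpose a, ← det_mul]
  have : aᵀ * (d - c * ⅟a * b) = 1 := by
    rw [Matrix.mul_sub, ← k2, ← Matrix.mul_assoc, ← Matrix.mul_assoc,
      eq_neg_of_add_eq_zero_left k1,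
      Matrix.neg_mul, Matrix.neg_mul, Matrix.mul_invOf_cancel_right]
    abel
  rw [this, det_one]

/-- The determinant criterion: the hypothesis says that the image of `A * M * Aᵀ` is transverse to
the Lagrangian spanned by `V`, an open condition on `A * M * Aᵀ`. -/
lemma det_eq_one (h : IsLagrangianFrame U V) {M : Matrix (Fin (4 * n)) (Fin (4 * n)) ℂ}
    (hM : U * (Vᵀ * M * V) * Uᵀ = M)
    {A : Matrix (Fin (4 * n)) (Fin (4 * n)) ℂ} (hA : Aᵀ * A = 1)
    (ha : (Vᵀ * (A * M * Aᵀ) * V).det ≠ 0) : A.det = 1 := by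
  apply h.det_eq_one_of_block hA
  intro h0
  apply ha
  have : Vᵀ * (A * M * Aᵀ) * V = (Vᵀ * A * U) * (Vᵀ * M * V) * (Vᵀ * A * U)ᵀ := by
    conv_lhs => rw [← hM]
    simp only [transpose_mul, transpose_transpose, Matrix.mul_assoc]
  rw [this, det_mul, det_mul, h0]
  simp

lemma rank_eq (h : IsLagrangianFrame U V) (m : Matrix (Fin (2 * n)) (Fin (2 * n)) ℂ) :
    (U * m * Uᵀ).rank = m.rank := by
  apply le_antisymm
  · exact (rank_mul_le_left _ _).trans (rank_mul_le_right _ _)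
  · have : m = Vᵀ * (U * m * Uᵀ) * V := by
      calc m = (Vᵀ * U) * m * (Uᵀ * V) := by rw [h.dual, h.dual']; simp
        _ = _ := by simp only [Matrix.mul_assoc]
    conv_lhs => rw [this]
    exact (rank_mul_le_left _ _).trans (rank_mul_le_right _ _)

end IsLagrangianFrame

/-! ### Density of invertible skew matrices -/

lemma rank_eq_card_iff_det_ne_zero {k : ℕ} (m : Matrix (Fin k) (Fin k) ℂ) :
    m.rank = k ↔ m.det ≠ 0 := by
  constructor
  · intro h h0
    obtain ⟨v, hv, hmv⟩ := exists_mulVec_eq_zero_iff.2 h0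
    have h1 := m.mulVecLin.finrank_range_add_finrank_ker
    have h2 : Module.finrank ℂ (LinearMap.range m.mulVecLin) = k := h
    rw [h2, Module.finrank_fin_fun] at h1
    have h3 : LinearMap.ker m.mulVecLin = ⊥ := Submodule.finrank_eq_zero.1 (by omega)
    have : v ∈ LinearMap.ker m.mulVecLin := by simpa using hmv
    rw [h3] at this
    exact hv (by simpa using this)
  · intro h
    simpa using rank_of_det_ne_zero h

lemma exists_skew_det_ne_zero (n : ℕ) :
    ∃ w : Matrix (Fin (2 * n)) (Fin (2 * n)) ℂ, wᵀ = -w ∧ w.det ≠ 0 := by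
  let e : Fin (2 * n) ≃ Fin n ⊕ Fin n := Fintype.equivOfCardEq (by simp; ring)
  refine ⟨(Matrix.J (Fin n) ℂ).submatrix e e, ?_, ?_⟩
  · rw [transpose_submatrix, Matrix.J_transpose]; rfl
  · rw [det_submatrix_equiv_self]
    exact (Matrix.isUnit_det_J (Fin n) ℂ).ne_zero

lemma zero_mem_closure_det_ne_zero {k : ℕ} (m w : Matrix (Fin k) (Fin k) ℂ) (hw : w.det ≠ 0) :
    (0 : ℂ) ∈ closure {t : ℂ | (t • w + m).det ≠ 0} := by
  let p : Polynomial ℂ := ((Polynomial.X : Polynomial ℂ) • w.map Polynomial.C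
    + m.map Polynomial.C).det
  have hp : p ≠ 0 := by
    intro h0
    have := Polynomial.coeff_det_X_add_C_card w m
    apply hw
    rw [← this]
    change p.coeff _ = 0
    rw [h0, Polynomial.coeff_zero]
  have hev : ∀ t, p.eval t = (t • w + m).det := by
    intro t
    rw [← Polynomial.coe_evalRingHom, RingHom.map_det]
    congr 1
    ext i j
    simp [mul_comm t]
  have : {t : ℂ | (t • w + m).det ≠ 0} = (p.rootSet ℂ)ᶜ := by
    ext t
    simp [Polynomial.mem_rootSet, hp, ← hev]
  rw [this]
  exact (p.rootSet_finite ℂ).countable.dense_compl ℂ 0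

/-! ### Isotropic subspaces -/

/-- A subspace on which the complex bilinear form `x ⬝ᵥ y` vanishes identically. -/
def IsIsotropic {N : ℕ} (L : Submodule ℂ (Fin N → ℂ)) : Prop :=
  ∀ x ∈ L, ∀ y ∈ L, x ⬝ᵥ y = 0

/-- The orthogonal complement for the complex bilinear form `x ⬝ᵥ y` (no complex conjugation). -/
def dotPerp {N : ℕ} (L : Submodule ℂ (Fin N → ℂ)) : Submodule ℂ (Fin N → ℂ) :=
  (Matrix.toBilin' (1 : Matrix (Fin N) (Fin N) ℂ)).orthogonal L

lemma mem_dotPerp {N : ℕ} {L : Submodule ℂ (Fin N → ℂ)} {v : Fin N → ℂ} :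
    v ∈ dotPerp L ↔ ∀ x ∈ L, x ⬝ᵥ v = 0 := by
  simp [dotPerp, LinearMap.BilinForm.mem_orthogonal_iff,
    Matrix.toBilin'_apply']

lemma finrank_dotPerp {N : ℕ} (L : Submodule ℂ (Fin N → ℂ)) :
    Module.finrank ℂ (dotPerp L) = N - Module.finrank ℂ L := by
  have h := LinearMap.BilinForm.finrank_orthogonal
    (B := Matrix.toBilin' (1 : Matrix (Fin N) (Fin N) ℂ))
    (LinearMap.BilinForm.nondegenerate_toBilin'_of_det_ne_zero' _ (by simp)) L
  rwa [Module.finrank_fin_fun] at h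

lemma IsIsotropic.two_mul_finrank_le {N : ℕ} {L : Submodule ℂ (Fin N → ℂ)}
    (h : IsIsotropic L) : 2 * Module.finrank ℂ L ≤ N := by
  have h1 : L ≤ dotPerp L := fun v hv => mem_dotPerp.2 fun x hx => h x hx v hv
  have h2 := Submodule.finrank_mono h1
  rw [finrank_dotPerp] at h2
  have h3 := Submodule.finrank_le L
  simp at h3
  omega

lemma IsIsotropic.sup_span {N : ℕ} {L : Submodule ℂ (Fin N → ℂ)}
    (h : IsIsotropic L) {v : Fin N → ℂ} (hv : v ∈ dotPerp L) (hvv : v ⬝ᵥ v = 0) :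
    IsIsotropic (L ⊔ ℂ ∙ v) := by
  intro x hx y hy
  obtain ⟨x, hxL, _, hs, rfl⟩ := Submodule.mem_sup.1 hx
  obtain ⟨s, rfl⟩ := Submodule.mem_span_singleton.1 hs
  obtain ⟨y, hyL, _, ht, rfl⟩ := Submodule.mem_sup.1 hy
  obtain ⟨t, rfl⟩ := Submodule.mem_span_singleton.1 ht
  have h1 := mem_dotPerp.1 hv x hxL
  have h2 := mem_dotPerp.1 hv y hyL
  rw [dotProduct_comm] at h2
  simp [h x hxL y hyL, h1, h2, hvv]

/-- Every isotropic subspace of `ℂ^{4n}` lies in a Lagrangian one. A maximal isotropic `L` of smaller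
dimension would have codimension at least two in its orthogonal complement, and a plane there
complementary to `L` contains an isotropic line. -/
lemma IsIsotropic.exists_lagrangian {n : ℕ} {L₀ : Submodule ℂ (Fin (4 * n) → ℂ)}
    (h₀ : IsIsotropic L₀) :
    ∃ L, L₀ ≤ L ∧ IsIsotropic L ∧ Module.finrank ℂ L = 2 * n := by
  obtain ⟨L, hL₀, hmax⟩ := exists_maximal_ge_of_wellFoundedGT IsIsotropic L₀ h₀
  have hL := hmax.prop
  refine ⟨L, hL₀, hL, ?_⟩
  have hle := hL.two_mul_finrank_le
  by_contra hne
  have hmem : ∀ v ∈ dotPerp L, v ⬝ᵥ v = 0 → v ∈ L := by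
    intro v hv hvv
    have := hmax.le_of_ge (hL.sup_span hv hvv) le_sup_left
    exact this (Submodule.mem_sup_right (Submodule.mem_span_singleton_self v))
  have hperp := finrank_dotPerp L
  have exists_notMem : ∀ W : Submodule ℂ (Fin (4 * n) → ℂ),
      Module.finrank ℂ W < Module.finrank ℂ (dotPerp L) → ∃ v ∈ dotPerp L, v ∉ W := by
    intro W hW
    by_contra! hc
    exact absurd (Submodule.finrank_mono (show dotPerp L ≤ W from hc)) (by omega)
  obtain ⟨v, hv, hvL⟩ := exists_notMem L (by omega)
  obtain ⟨w, hw, hwL⟩ := exists_notMem (L ⊔ ℂ ∙ v) (by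
    have h1 := Submodule.finrank_add_le_finrank_add_finrank L (ℂ ∙ v)
    have h2 := finrank_span_singleton (K := ℂ) (v := v) (by rintro rfl; exact hvL L.zero_mem)
    omega)
  have hww : w ⬝ᵥ w ≠ 0 := fun h => hwL (Submodule.mem_sup_left (hmem w hw h))
  obtain ⟨t, ht⟩ := exists_quadratic_eq_zero (a := w ⬝ᵥ w) (b := 2 * (v ⬝ᵥ w)) (c := v ⬝ᵥ v) hww
    (by
      obtain ⟨z, hz⟩ := IsAlgClosed.exists_pow_nat_eq
        (discrim (w ⬝ᵥ w) (2 * (v ⬝ᵥ w)) (v ⬝ᵥ v)) two_pos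
      exact ⟨z, by rw [← hz, sq]⟩)
  have hu : v + t • w ∈ L := by
    apply hmem _ (Submodule.add_mem _ hv (Submodule.smul_mem _ _ hw))
    rw [← ht]
    simp [dotProduct_comm w v]
    ring
  have ht0 : t ≠ 0 := by
    rintro rfl
    exact hvL (by simpa using hu)
  apply hwL
  have : w = t⁻¹ • (v + t • w) + (-t⁻¹) • v := by
    rw [smul_add, smul_smul, inv_mul_cancel₀ ht0]; module
  rw [this]
  exact Submodule.add_mem_sup (Submodule.smul_mem _ _ hu)
    (Submodule.smul_mem _ _ (Submodule.mem_span_singleton_self v))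

/-- A Hermitian orthonormal basis of a Lagrangian subspace `L`, written as the columns of `U`;
`U * Uᴴ` is the orthogonal projection onto `L`. -/
lemma IsIsotropic.exists_frame {n : ℕ} {L : Submodule ℂ (Fin (4 * n) → ℂ)}
    (h : IsIsotropic L) (hd : Module.finrank ℂ L = 2 * n) :
    ∃ U : Matrix (Fin (4 * n)) (Fin (2 * n)) ℂ,
      Uᵀ * U = 0 ∧ Uᴴ * U = 1 ∧ ∀ x ∈ L, (U * Uᴴ) *ᵥ x = x := by
  let E := (WithLp.linearEquiv 2 ℂ (Fin (4 * n) → ℂ)).symm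
  let L' : Submodule ℂ (EuclideanSpace ℂ (Fin (4 * n))) := L.map E.toLinearMap
  have hd' : Module.finrank ℂ L' = 2 * n := by
    rw [← hd]; exact LinearEquiv.finrank_map_eq E L
  let b : OrthonormalBasis (Fin (2 * n)) ℂ L' :=
    (stdOrthonormalBasis ℂ L').reindex (finCongr hd')
  have hbL : ∀ j, WithLp.ofLp (b j : EuclideanSpace ℂ (Fin (4 * n))) ∈ L := by
    intro j
    obtain ⟨x, hx, hxj⟩ := (b j).2
    rw [← hxj]
    exact hx
  let U : Matrix (Fin (4 * n)) (Fin (2 * n)) ℂ := fun i j => (b j : EuclideanSpace ℂ _) i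
  refine ⟨U, ?_, ?_, ?_⟩
  · ext i j
    exact h _ (hbL i) _ (hbL j)
  · ext i j
    have := orthonormal_iff_ite.1 b.orthonormal i j
    rw [Submodule.coe_inner, PiLp.inner_apply] at this
    rw [mul_apply, one_apply, ← this]
    exact Finset.sum_congr rfl fun k _ => by
      simp [U, mul_comm]
      exact Or.inl rfl
  · intro x hx
    let x' : L' := ⟨E x, Submodule.mem_map_of_mem hx⟩
    have h1 := congrArg (fun y : L' => WithLp.ofLp (y : EuclideanSpace ℂ (Fin (4 * n))))
      (b.sum_repr' x')
    have h2 : Uᴴ *ᵥ x = fun j => inner ℂ (b j) x' := by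
      ext j
      rw [Submodule.coe_inner, PiLp.inner_apply]
      simp only [mulVec, dotProduct]
      exact Finset.sum_congr rfl fun k _ => by
        simp [U, x', E, mul_comm]
        exact Or.inl rfl
    rw [← mulVec_mulVec, h2]
    ext i
    have h3 := congrFun h1 i
    simp only [x', E] at h3
    simp only [mulVec, dotProduct, U]
    simp at h3
    rw [← h3]
    exact Finset.sum_congr rfl fun k _ => by simp [x', E, mul_comm]

/-- Normal form: a square-zero skew matrix is `U * m * Uᵀ` in a suitable Lagrangian frame, where
`m = Vᵀ * M * V`. -/
lemma exists_lagrangianFrame {n : ℕ} {M : Matrix (Fin (4 * n)) (Fin (4 * n)) ℂ}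
    (hskew : Mᵀ = -M) (hsq : M * M = 0) :
    ∃ U V : Matrix (Fin (4 * n)) (Fin (2 * n)) ℂ,
      IsLagrangianFrame U V ∧ U * (Vᵀ * M * V) * Uᵀ = M := by
  have h₀ : IsIsotropic (LinearMap.range M.mulVecLin) := by
    rintro _ ⟨x, rfl⟩ _ ⟨y, rfl⟩
    simp only [mulVecLin_apply]
    rw [← vecMul_transpose, ← dotProduct_mulVec, mulVec_mulVec, hskew]
    simp [hsq]
  obtain ⟨L, hML, hL, hd⟩ := h₀.exists_lagrangian
  obtain ⟨U, h1, h2, h3⟩ := hL.exists_frame hd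
  have hUM : U * Uᴴ * M = M := by
    apply Matrix.ext_of_mulVec_single
    intro i
    rw [← mulVec_mulVec]
    exact h3 _ (hML ⟨_, rfl⟩)
  have hV : (U.map star)ᵀ = Uᴴ := rfl
  -- The complex conjugate of an orthonormal basis of `L` spans a complementary Lagrangian.
  refine ⟨U, U.map star, ⟨h1, ?_, h2⟩, ?_⟩
  · have := congrArg (fun X => X.map star) h1
    ext i j
    have := congrFun (congrFun this i) j
    simpa [mul_apply] using this
  · have h4 : M * (U.map star * Uᵀ) = M := by
      have := congrArg transpose hUM
      rw [transpose_mul, hskew, transpose_mul, ← hV, transpose_transpose] at this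
      simpa using this
    calc _ = (U * Uᴴ * M) * (U.map star * Uᵀ) := by
          rw [hV, Matrix.mul_assoc U (Uᴴ * M * U.map star), Matrix.mul_assoc (Uᴴ * M),
            Matrix.mul_assoc U Uᴴ M, Matrix.mul_assoc U]
      _ = M := by rw [hUM, h4]

/-! ### Parity of the rank, and reflections -/

/-- A skew matrix restricts to a nondegenerate alternating form on a complement of its kernel, and a
skew matrix of odd size is singular. -/
lemma even_rank_of_skew {N : ℕ} {M : Matrix (Fin N) (Fin N) ℂ} (hskew : Mᵀ = -M) :
    Even M.rank := by
  obtain ⟨W, hW⟩ := (LinearMap.ker M.mulVecLin).exists_isCompl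
  have hrank : Module.finrank ℂ W = M.rank := by
    have h1 := Submodule.finrank_add_eq_of_isCompl hW
    have h2 := M.mulVecLin.finrank_range_add_finrank_ker
    have h3 : Module.finrank ℂ (LinearMap.range M.mulVecLin) = M.rank := rfl
    omega
  let b := Module.finBasisOfFinrankEq ℂ W hrank
  let C : Matrix (Fin N) (Fin M.rank) ℂ := fun i j => (b j : Fin N → ℂ) i
  have hC : ∀ x, C *ᵥ x = ((∑ j, x j • b j : W) : Fin N → ℂ) := by
    intro x
    ext i
    simp [C, mulVec, dotProduct, mul_comm]
  have hdet : (Cᵀ * M * C).det ≠ 0 := by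
    intro h0
    obtain ⟨x, hx, hx0⟩ := exists_mulVec_eq_zero_iff.2 h0
    apply hx
    have h1 : M *ᵥ (C *ᵥ x) = 0 := by
      apply dotProduct_eq_zero
      intro y
      obtain ⟨k, hk, w, hw, rfl⟩ := Submodule.mem_sup.1
        (hW.sup_eq_top ▸ Submodule.mem_top : y ∈ LinearMap.ker M.mulVecLin ⊔ W)
      have hk0 : M *ᵥ k = 0 := by simpa using hk
      have hw' : w = C *ᵥ (b.repr ⟨w, hw⟩) := by
        rw [hC, b.sum_repr]
      rw [dotProduct_add]
      have e1 : (M *ᵥ (C *ᵥ x)) ⬝ᵥ k = 0 := by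
        rw [← vecMul_transpose, ← dotProduct_mulVec, hskew, neg_mulVec, hk0]
        simp
      have e2 : (M *ᵥ (C *ᵥ x)) ⬝ᵥ w = 0 := by
        rw [hw', dotProduct_mulVec, ← mulVec_transpose, mulVec_mulVec,
          mulVec_mulVec, hx0]
        simp
      rw [e1, e2, add_zero]
    have h2 : C *ᵥ x ∈ LinearMap.ker M.mulVecLin ⊓ W := by
      refine ⟨by simpa using h1, ?_⟩
      rw [hC]
      exact Subtype.property _
    rw [hW.inf_eq_bot, Submodule.mem_bot, hC] at h2
    have h3 : (∑ j, x j • b j : W) = 0 := Subtype.ext h2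
    ext j
    exact Fintype.linearIndependent_iff.1 b.linearIndependent x h3 j
  have hCskew : (Cᵀ * M * C)ᵀ = -(Cᵀ * M * C) := by
    simp [transpose_mul, hskew, Matrix.mul_assoc]
  have h1 := congrArg det hCskew
  rw [det_transpose, det_neg, Fintype.card_fin] at h1
  by_contra hodd
  rw [Nat.not_even_iff_odd] at hodd
  rw [hodd.neg_one_pow] at h1
  apply hdet
  linear_combination h1 / 2

/-- The matrix of the reflection in the hyperplane orthogonal to `v`; meaningful when
`v ⬝ᵥ v ≠ 0`. -/
noncomputable def reflectionMatrix {N : ℕ} (v : Fin N → ℂ) : Matrix (Fin N) (Fin N) ℂ :=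
  1 - (2 / (v ⬝ᵥ v)) • vecMulVec v v

lemma reflectionMatrix_transpose {N : ℕ} (v : Fin N → ℂ) :
    (reflectionMatrix v)ᵀ = reflectionMatrix v := by
  simp [reflectionMatrix, transpose_vecMulVec]

lemma reflectionMatrix_mul_self {N : ℕ} {v : Fin N → ℂ} (hv : v ⬝ᵥ v ≠ 0) :
    reflectionMatrix v * reflectionMatrix v = 1 := by
  have : vecMulVec v v * vecMulVec v v = (v ⬝ᵥ v) • vecMulVec v v := by
    rw [vecMulVec_mul_vecMulVec, vecMulVec_smul]
  simp only [reflectionMatrix, Matrix.sub_mul, Matrix.mul_sub, Matrix.mul_one, Matrix.one_mul,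
    Matrix.smul_mul, Matrix.mul_smul, this]
  rw [smul_smul, div_mul_cancel₀ _ hv]
  module

lemma det_reflectionMatrix {N : ℕ} {v : Fin N → ℂ} (hv : v ⬝ᵥ v ≠ 0) :
    (reflectionMatrix v).det = -1 := by
  have : reflectionMatrix v = 1 + vecMulVec (-(2 / (v ⬝ᵥ v)) • v) v := by
    rw [smul_vecMulVec, reflectionMatrix]; module
  rw [this, vecMulVec_eq Unit, det_one_add_replicateCol_mul_replicateRow]
  simp [dotProduct_smul]
  field_simp
  ring

/-- The kernel has dimension at least `2n + 2`, too large to be isotropic. -/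
lemma exists_ker_nonisotropic {n : ℕ} (hn : 1 ≤ n) {M : Matrix (Fin (4 * n)) (Fin (4 * n)) ℂ}
    (hM : M.rank ≤ 2 * n - 2) : ∃ v, M *ᵥ v = 0 ∧ v ⬝ᵥ v ≠ 0 := by
  by_contra! hc
  have hiso : IsIsotropic (LinearMap.ker M.mulVecLin) := by
    intro x hx y hy
    simp only [LinearMap.mem_ker, mulVecLin_apply] at hx hy
    have h1 := hc (x + y) (by rw [mulVec_add, hx, hy, add_zero])
    simp only [add_dotProduct, dotProduct_add, hc x hx, hc y hy, dotProduct_comm y x] at h1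
    linear_combination h1 / 2
  have h1 := hiso.two_mul_finrank_le
  have h2 := M.mulVecLin.finrank_range_add_finrank_ker
  have h3 : Module.finrank ℂ (LinearMap.range M.mulVecLin) = M.rank := rfl
  rw [Module.finrank_fin_fun] at h2
  omega

/-! ### The two orbits and their closures -/

lemma mem_soOrbit_iff {N : ℕ} {M₀ M : Matrix (Fin N) (Fin N) ℂ} :
    M ∈ soOrbit M₀ ↔ ∃ A : Matrix (Fin N) (Fin N) ℂ, Aᵀ * A = 1 ∧ A.det = 1 ∧
      M = A * M₀ * Aᵀ := by
  refine exists_congr fun A => and_congr_right fun hA => ?_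
  rw [inv_eq_left_inv hA]

lemma exists_conj_of_mem_soOrbit {N : ℕ} {M₀ M M' : Matrix (Fin N) (Fin N) ℂ}
    (hM : M ∈ soOrbit M₀) (hM' : M' ∈ soOrbit M₀) :
    ∃ A : Matrix (Fin N) (Fin N) ℂ, Aᵀ * A = 1 ∧ A.det = 1 ∧ M' = A * M * Aᵀ := by
  obtain ⟨B, hB, hBd, rfl⟩ := mem_soOrbit_iff.1 hM
  obtain ⟨C, hC, hCd, rfl⟩ := mem_soOrbit_iff.1 hM'
  refine ⟨C * Bᵀ, ?_, by simp [hBd, hCd], ?_⟩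
  · have hB' : B * Bᵀ = 1 := mul_eq_one_comm.1 hB
    rw [transpose_mul, transpose_transpose, Matrix.mul_assoc, ← Matrix.mul_assoc Cᵀ, hC,
      Matrix.one_mul, hB']
  · calc C * M₀ * Cᵀ = C * (Bᵀ * B) * M₀ * (Bᵀ * B) * Cᵀ := by simp [hB]
      _ = _ := by simp only [transpose_mul, transpose_transpose, Matrix.mul_assoc]

/-- The square-zero skew matrices of maximal rank `2n`. -/
def maxRankCone (n : ℕ) : Set (Matrix (Fin (4 * n)) (Fin (4 * n)) ℂ) :=
  {M | Mᵀ = -M ∧ M * M = 0 ∧ M.rank = 2 * n}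

lemma conj_mem_maxRankCone {n : ℕ} {M A : Matrix (Fin (4 * n)) (Fin (4 * n)) ℂ}
    (hA : Aᵀ * A = 1) (hM : M ∈ maxRankCone n) : A * M * Aᵀ ∈ maxRankCone n := by
  obtain ⟨h1, h2, h3⟩ := hM
  have hdet : IsUnit A.det := by
    have := congrArg det hA
    rw [det_mul, det_one] at this
    exact IsUnit.of_mul_eq_one_right _ this
  refine ⟨by simp [transpose_mul, h1, Matrix.mul_assoc], ?_, ?_⟩
  · calc _ = A * M * (Aᵀ * A) * M * Aᵀ := by simp only [Matrix.mul_assoc]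
      _ = A * (M * M) * Aᵀ := by rw [hA]; simp only [Matrix.mul_one, Matrix.mul_assoc]
      _ = 0 := by simp [h2]
  · rw [rank_mul_eq_left_of_isUnit_det _ _ (by rwa [det_transpose]),
      rank_mul_eq_right_of_isUnit_det _ _ hdet, h3]

lemma exists_frame_of_mem_maxRankCone {n : ℕ} {M : Matrix (Fin (4 * n)) (Fin (4 * n)) ℂ}
    (hM : M ∈ maxRankCone n) : ∃ U V : Matrix (Fin (4 * n)) (Fin (2 * n)) ℂ,
      IsLagrangianFrame U V ∧ U * (Vᵀ * M * V) * Uᵀ = M ∧ (Vᵀ * M * V).det ≠ 0 := by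
  obtain ⟨h1, h2, h3⟩ := hM
  obtain ⟨U, V, hUV, hm⟩ := exists_lagrangianFrame h1 h2
  refine ⟨U, V, hUV, hm, ?_⟩
  rw [← rank_eq_card_iff_det_ne_zero, ← hUV.rank_eq, hm, h3]

/-- Orthogonal matrices of determinant `-1` exchange the two orbits: otherwise some `M` of rank `2n`
would be fixed by an orthogonal matrix of determinant `-1`. -/
lemma conj_mem_other {n : ℕ} {O₁ O₂ : Set (Matrix (Fin (4 * n)) (Fin (4 * n)) ℂ)}
    (hO₁ : ∃ M₀ ∈ O₁, O₁ = soOrbit M₀) (hunion : O₁ ∪ O₂ = maxRankCone n)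
    {R M : Matrix (Fin (4 * n)) (Fin (4 * n)) ℂ} (hR : Rᵀ * R = 1) (hRd : R.det = -1)
    (hM : M ∈ O₁) : R * M * Rᵀ ∈ O₂ := by
  have hMS : M ∈ maxRankCone n := hunion ▸ Or.inl hM
  have hRM : R * M * Rᵀ ∈ O₁ ∪ O₂ := hunion ▸ conj_mem_maxRankCone hR hMS
  refine hRM.resolve_left fun hmem => ?_
  obtain ⟨M₀, -, rfl⟩ := hO₁
  obtain ⟨A, hA, hAd, hAM⟩ := exists_conj_of_mem_soOrbit hmem hM
  obtain ⟨U, V, hUV, hm, hdet⟩ := exists_frame_of_mem_maxRankCone hMS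
  have hAM' : (A * R) * M * (A * R)ᵀ = M := by
    conv_rhs => rw [hAM]
    simp only [transpose_mul, Matrix.mul_assoc]
  have := hUV.det_eq_one hm (A := A * R)
    (by rw [transpose_mul, Matrix.mul_assoc, ← Matrix.mul_assoc Aᵀ, hA, Matrix.one_mul, hR])
    (by rwa [hAM'])
  rw [det_mul, hAd, hRd] at this
  norm_num at this

/-- Neither orbit meets the closure of the other. -/
lemma notMem_closure_other {n : ℕ} (hn : 1 ≤ n)
    {O₁ O₂ : Set (Matrix (Fin (4 * n)) (Fin (4 * n)) ℂ)}
    (hO₁ : ∃ M₀ ∈ O₁, O₁ = soOrbit M₀) (hO₂ : ∃ M₀ ∈ O₂, O₂ = soOrbit M₀)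
    (hunion : O₁ ∪ O₂ = maxRankCone n)
    {M : Matrix (Fin (4 * n)) (Fin (4 * n)) ℂ} (hM : M ∈ O₁) : M ∉ closure O₂ := by
  intro hcl
  have hMS : M ∈ maxRankCone n := hunion ▸ Or.inl hM
  obtain ⟨U, V, hUV, hm, hdet⟩ := exists_frame_of_mem_maxRankCone hMS
  have hopen : IsOpen {N : Matrix (Fin (4 * n)) (Fin (4 * n)) ℂ | (Vᵀ * N * V).det ≠ 0} := by
    apply isOpen_ne_fun _ continuous_const
    fun_prop
  obtain ⟨N, hN, hNO⟩ := mem_closure_iff.1 hcl _ hopen hdet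
  let v : Fin (4 * n) → ℂ := Pi.single ⟨0, by omega⟩ 1
  have hv : v ⬝ᵥ v ≠ 0 := by simp [v]
  have hR : (reflectionMatrix v)ᵀ * reflectionMatrix v = 1 := by
    rw [reflectionMatrix_transpose, reflectionMatrix_mul_self hv]
  have hRd := det_reflectionMatrix hv
  set R := reflectionMatrix v
  have hRN : R * N * Rᵀ ∈ O₁ := conj_mem_other hO₂ (by rw [Set.union_comm, hunion]) hR hRd hNO
  obtain ⟨M₀, -, rfl⟩ := hO₁
  obtain ⟨A, hA, hAd, hAM⟩ := exists_conj_of_mem_soOrbit hM hRN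
  have hN' : (Rᵀ * A) * M * (Rᵀ * A)ᵀ = N := by
    calc _ = Rᵀ * (A * M * Aᵀ) * R := by
          simp only [transpose_mul, transpose_transpose, Matrix.mul_assoc]
      _ = (Rᵀ * R) * N * (Rᵀ * R) := by rw [← hAM]; simp only [Matrix.mul_assoc]
      _ = N := by simp [hR]
  have := hUV.det_eq_one hm (A := Rᵀ * A)
    (by
      rw [transpose_mul, transpose_transpose, Matrix.mul_assoc, ← Matrix.mul_assoc R,
        mul_eq_one_comm.1 hR, Matrix.one_mul, hA])
    (by rw [hN']; exact hN)
  rw [det_mul, hAd, det_transpose, hRd] at this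
  norm_num at this

/-- A point of low rank is fixed by a reflection, which carries one orbit closure to the other. -/
lemma mem_closure_other {n : ℕ} (hn : 1 ≤ n)
    {O₁ O₂ : Set (Matrix (Fin (4 * n)) (Fin (4 * n)) ℂ)}
    (hO₁ : ∃ M₀ ∈ O₁, O₁ = soOrbit M₀) (hunion : O₁ ∪ O₂ = maxRankCone n)
    {M : Matrix (Fin (4 * n)) (Fin (4 * n)) ℂ} (hskew : Mᵀ = -M) (hrank : M.rank ≤ 2 * n - 2)
    (hM : M ∈ closure O₁) : M ∈ closure O₂ := by
  obtain ⟨v, hMv, hv⟩ := exists_ker_nonisotropic hn hrank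
  have hR : (reflectionMatrix v)ᵀ * reflectionMatrix v = 1 := by
    rw [reflectionMatrix_transpose, reflectionMatrix_mul_self hv]
  have hvM : v ᵥ* M = 0 := by
    rw [← mulVec_transpose, hskew, neg_mulVec, hMv, neg_zero]
  have hfix : reflectionMatrix v * M * (reflectionMatrix v)ᵀ = M := by
    rw [reflectionMatrix_transpose]
    simp [reflectionMatrix, Matrix.sub_mul, Matrix.mul_sub, vecMulVec_mul, mul_vecMulVec, hvM, hMv]
  rw [← hfix]
  exact map_mem_closure (f := fun X => reflectionMatrix v * X * (reflectionMatrix v)ᵀ)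
    (by fun_prop) hM fun X hX => conj_mem_other hO₁ hunion hR (det_reflectionMatrix hv) hX

lemma closure_maxRankCone (n : ℕ) :
    closure (maxRankCone n) =
      {M : Matrix (Fin (4 * n)) (Fin (4 * n)) ℂ | Mᵀ = -M ∧ M * M = 0} := by
  apply Set.Subset.antisymm
  · apply closure_minimal
    · rintro M ⟨h1, h2, -⟩
      exact ⟨h1, h2⟩
    · exact (isClosed_eq (by fun_prop) (by fun_prop)).inter
        (isClosed_eq (by fun_prop) (by fun_prop))
  · rintro M ⟨h1, h2⟩
    obtain ⟨U, V, hUV, hm⟩ := exists_lagrangianFrame h1 h2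
    set m := Vᵀ * M * V with hmdef
    have hmskew : mᵀ = -m := by
      simp [hmdef, transpose_mul, h1, Matrix.mul_assoc]
    obtain ⟨w, hw, hwd⟩ := exists_skew_det_ne_zero n
    have h0 := zero_mem_closure_det_ne_zero m w hwd
    have := map_mem_closure (f := fun t : ℂ => U * (t • w + m) * Uᵀ) (t := maxRankCone n)
      (by fun_prop) h0 ?_
    · simpa [hm] using this
    · intro t ht
      refine ⟨?_, ?_, ?_⟩
      · simp only [transpose_mul, transpose_transpose, transpose_add, transpose_smul, hw, hmskew,
          Matrix.mul_assoc]
        rw [smul_neg, ← neg_add, Matrix.neg_mul, Matrix.mul_neg]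
      · calc _ = U * (t • w + m) * (Uᵀ * U) * (t • w + m) * Uᵀ := by
              simp only [Matrix.mul_assoc]
          _ = 0 := by rw [hUV.isotropic_left]; simp
      · rw [hUV.rank_eq, rank_eq_card_iff_det_ne_zero]
        exact ht

/-- The Higgs branch of Sp(n) with 2n flavours is the union of the closures of the two
SO(4n, ℂ)-orbits O₁, O₂ of maximal-rank square-zero antisymmetric matrices, and the
intersection of the two closures is the set of square-zero antisymmetric matrices of rank
at most 2n − 2 (the Higgs branch of Sp(n−1) with the same flavour symmetry). -/
theorem two_cones_union_and_intersection (n : ℕ) (hn : 1 ≤ n)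
    (O₁ O₂ : Set (Matrix (Fin (4 * n)) (Fin (4 * n)) ℂ))
    (hO₁ : ∃ M₀ ∈ O₁, O₁ = soOrbit M₀)
    (hO₂ : ∃ M₀ ∈ O₂, O₂ = soOrbit M₀)
    (hdisj : O₁ ∩ O₂ = ∅)
    (hunion : O₁ ∪ O₂ = {M : Matrix (Fin (4 * n)) (Fin (4 * n)) ℂ |
        Mᵀ = -M ∧ M * M = 0 ∧ M.rank = 2 * n}) :
    closure O₁ ∪ closure O₂ =
      {M : Matrix (Fin (4 * n)) (Fin (4 * n)) ℂ | Mᵀ = -M ∧ M * M = 0} ∧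
    closure O₁ ∩ closure O₂ =
      {M : Matrix (Fin (4 * n)) (Fin (4 * n)) ℂ |
        Mᵀ = -M ∧ M * M = 0 ∧ M.rank ≤ 2 * n - 2} := by
  have hunion' : O₁ ∪ O₂ = maxRankCone n := hunion
  have hunion'' : O₂ ∪ O₁ = maxRankCone n := by rw [Set.union_comm, hunion']
  have hcl : closure O₁ ∪ closure O₂ =
      {M : Matrix (Fin (4 * n)) (Fin (4 * n)) ℂ | Mᵀ = -M ∧ M * M = 0} := by
    rw [← closure_union, hunion', closure_maxRankCone]
  refine ⟨hcl, Set.Subset.antisymm ?_ ?_⟩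
  · rintro M ⟨hM₁, hM₂⟩
    obtain ⟨h1, h2⟩ : M ∈ {M | Mᵀ = -M ∧ M * M = 0} := hcl ▸ Or.inl hM₁
    refine ⟨h1, h2, ?_⟩
    have hle : M.rank ≤ 2 * n := by
      obtain ⟨U, V, hUV, hm⟩ := exists_lagrangianFrame h1 h2
      rw [← hm, hUV.rank_eq]
      exact rank_le_width _
    have hne : M.rank ≠ 2 * n := by
      intro h3
      rcases (hunion ▸ ⟨h1, h2, h3⟩ : M ∈ O₁ ∪ O₂) with h | h
      · exact notMem_closure_other hn hO₁ hO₂ hunion' h hM₂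
      · exact notMem_closure_other hn hO₂ hO₁ hunion'' h hM₁
    obtain ⟨r, hr⟩ := even_rank_of_skew h1
    omega
  · rintro M ⟨h1, h2, h3⟩
    rcases (hcl ▸ ⟨h1, h2⟩ : M ∈ closure O₁ ∪ closure O₂) with h | h
    · exact ⟨h, mem_closure_other hn hO₁ hunion' h1 h3 h⟩
    · exact ⟨mem_closure_other hn hO₂ hunion'' h1 h3 h, h⟩
end
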